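/- arXiv:1109.3676 — 4 statements merged into one kernel-verified Lean document; each statement's English description precedes it below -/
import Mathlib

section
/- Let d ≥ 3 be an integer and assume condition (A-1) holds with some index α ∈ [0,2) and condition (A-3) holds. Then the radial profile of the Green function of the subordinate Brownian motion satisfies g(r) ≍ r^{−d−2} φ'(r^{−2}) / φ(r^{−2})² as r → 0+. -/
open MeasureTheory Set Filter Topology

/-!
Write `M s = ∫ t in 0..s, t * u t`. Differentiating `ℒ u = 1 / φ` gives `-(ℒ u)' = φ' / φ ^ 2`, and
since `u` is decreasing, `M s` is comparable to `(φ' / φ ^ 2) (1 / s)`. It remains to see that, for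
`s = r ^ 2`, the Gaussian average `g r` is comparable to `s ^ (-d / 2 - 1) * M s`.

For the upper bound, the heat kernel is at most `C * s ^ (-d / 2 - 1) * t`, which is used for
`t ≤ s`; beyond `s` it is at most `C * t ^ (-d / 2)`, and `u t ≤ u s ≤ 2 * M s / s ^ 2`.

For the lower bound, the heat kernel is at least `c * s ^ (-d / 2 - 1) * t` on `(ε * s, s]`, which
leaves `M s - M (ε * s)`. As `φ` increases and `φ'` has negative index of regular variation, the
value of `φ' / φ ^ 2` at `1 / (ε * s)` is a small multiple of its value at `1 / s` for small `ε`,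
so `M (ε * s)` is absorbed by `M s`.
-/

section

open Real

lemma integrableOn_mul_of_abs_le {X : Type*} [MeasurableSpace X] {ν : Measure X} {S : Set X}
    {C : ℝ} {k w f : X → ℝ} (hS : MeasurableSet S) (hk : Measurable k) (hw : Measurable w)
    (hwpos : ∀ t ∈ S, 0 < w t) (hkw : ∀ t ∈ S, |k t| ≤ C * w t)
    (hf : IntegrableOn (fun t => w t * f t) S ν) : IntegrableOn (fun t => k t * f t) S ν := by
  have hbound : ∀ᵐ t ∂ν.restrict S, ‖k t / w t‖ ≤ C := by
    filter_upwards [ae_restrict_mem hS] with t ht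
    rw [norm_div, Real.norm_eq_abs, Real.norm_of_nonneg (hwpos t ht).le, div_le_iff₀ (hwpos t ht)]
    exact hkw t ht
  refine (hf.bdd_mul (hk.div hw).aestronglyMeasurable hbound).congr ?_
  filter_upwards [ae_restrict_mem hS] with t ht
  rw [Pi.div_apply, ← mul_assoc, div_mul_cancel₀ _ (hwpos t ht).ne']

lemma setIntegral_pos_of_pos {X : Type*} [MeasurableSpace X] {ν : Measure X} {S : Set X}
    {f : X → ℝ} (hS : MeasurableSet S) (hνS : ν S ≠ 0) (hpos : ∀ t ∈ S, 0 < f t)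
    (hf : IntegrableOn f S ν) : 0 < ∫ t in S, f t ∂ν := by
  have hnonneg : 0 ≤ᵐ[ν.restrict S] f :=
    (ae_restrict_mem hS).mono fun t ht => (hpos t ht).le
  have hsupp : Function.support f ∩ S = S := inter_eq_right.2 fun t ht => (hpos t ht).ne'
  rw [setIntegral_pos_iff_support_of_nonneg_ae hnonneg hf, hsupp]
  exact hνS.bot_lt

lemma mul_exp_neg_mul_le_inv {l : ℝ} (hl : 0 < l) (t : ℝ) : t * exp (-(l * t)) ≤ l⁻¹ := by
  rw [← mul_le_mul_iff_right₀ hl, mul_inv_cancel₀ hl.ne', exp_neg, ← mul_assoc,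
    ← div_eq_mul_inv, div_le_one (exp_pos _)]
  linarith [add_one_le_exp (l * t)]

/-! ### Derivatives of Laplace-type integrals -/

section Laplace

variable {ν : Measure ℝ} {f : ℝ → ℝ} {a l m : ℝ}

lemma integrableOn_exp_neg_mul_mono (hml : m ≤ l)
    (hf : IntegrableOn (fun t => exp (-(m * t)) * f t) (Ioi 0) ν) :
    IntegrableOn (fun t => exp (-(l * t)) * f t) (Ioi 0) ν := by
  refine integrableOn_mul_of_abs_le (C := 1) measurableSet_Ioi (by fun_prop) (by fun_prop)
    (fun t _ => exp_pos _) (fun t (ht : 0 < t) => ?_) hf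
  rw [abs_exp, one_mul]
  gcongr

lemma integrableOn_mul_exp_neg_mul_mono (hml : m ≤ l)
    (hf : IntegrableOn (fun t => t * exp (-(m * t)) * f t) (Ioi 0) ν) :
    IntegrableOn (fun t => t * exp (-(l * t)) * f t) (Ioi 0) ν := by
  refine integrableOn_mul_of_abs_le (C := 1) measurableSet_Ioi (by fun_prop) (by fun_prop)
    (fun t (ht : 0 < t) => by positivity) (fun t (ht : 0 < t) => ?_) hf
  rw [abs_of_pos (by positivity), one_mul]
  gcongr

lemma integrableOn_mul_exp_neg_mul (hml : m < l)
    (hf : IntegrableOn (fun t => exp (-(m * t)) * f t) (Ioi 0) ν) :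
    IntegrableOn (fun t => t * exp (-(l * t)) * f t) (Ioi 0) ν := by
  refine integrableOn_mul_of_abs_le (C := (l - m)⁻¹) measurableSet_Ioi (by fun_prop) (by fun_prop)
    (fun t _ => exp_pos _) (fun t (ht : 0 < t) => ?_) hf
  have hsplit : exp (-(l * t)) = exp (-((l - m) * t)) * exp (-(m * t)) := by
    rw [← exp_add]
    ring_nf
  rw [abs_of_pos (by positivity), hsplit, ← mul_assoc]
  gcongr
  exact mul_exp_neg_mul_le_inv (sub_pos.2 hml) t

lemma hasDerivAt_integral_const_sub_exp_neg_mul (hml : m < l)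
    (hF : ∀ᶠ x in 𝓝 l, IntegrableOn (fun t => (a - exp (-(x * t))) * f t) (Ioi 0) ν)
    (hF' : IntegrableOn (fun t => t * exp (-(m * t)) * f t) (Ioi 0) ν) :
    HasDerivAt (fun x => ∫ t in Ioi 0, (a - exp (-(x * t))) * f t ∂ν)
      (∫ t in Ioi 0, t * exp (-(l * t)) * f t ∂ν) l := by
  refine (hasDerivAt_integral_of_dominated_loc_of_deriv_le (Ioi_mem_nhds hml)
    (hF.mono fun x hx => hx.aestronglyMeasurable) hF.self_of_nhds
    (F' := fun x t => t * exp (-(x * t)) * f t)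
    (integrableOn_mul_exp_neg_mul_mono hml.le hF').aestronglyMeasurable ?_ hF'.norm ?_).2
  · filter_upwards [ae_restrict_mem measurableSet_Ioi] with t (ht : 0 < t) x (hx : m < x)
    simp only [norm_mul, norm_eq_abs, abs_exp]
    gcongr
  · refine Eventually.of_forall fun t x _ => HasDerivAt.mul_const ?_ _
    simpa [mul_comm] using (((hasDerivAt_id x).mul_const t).neg.exp).const_sub a

lemma hasDerivAt_laplace (hml : m < l)
    (hf : IntegrableOn (fun t => exp (-(m * t)) * f t) (Ioi 0) ν) :
    HasDerivAt (fun x => ∫ t in Ioi 0, exp (-(x * t)) * f t ∂ν)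
      (-∫ t in Ioi 0, t * exp (-(l * t)) * f t ∂ν) l := by
  obtain ⟨k, hmk, hkl⟩ := exists_between hml
  have hF : ∀ᶠ x in 𝓝 l, IntegrableOn (fun t => (0 - exp (-(x * t))) * f t) (Ioi 0) ν := by
    filter_upwards [Ioi_mem_nhds hml] with x hx
    simpa using (integrableOn_exp_neg_mul_mono (le_of_lt hx) hf).neg
  simpa [integral_neg] using
    (hasDerivAt_integral_const_sub_exp_neg_mul hkl hF (integrableOn_mul_exp_neg_mul hmk hf)).fun_neg

lemma laplace_le_of_le (hml : m ≤ l) (hf0 : ∀ t, 0 < t → 0 ≤ f t)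
    (hf : IntegrableOn (fun t => exp (-(m * t)) * f t) (Ioi 0) ν) :
    ∫ t in Ioi 0, exp (-(l * t)) * f t ∂ν ≤ ∫ t in Ioi 0, exp (-(m * t)) * f t ∂ν := by
  refine setIntegral_mono_on (integrableOn_exp_neg_mul_mono hml hf) hf measurableSet_Ioi
    fun t (ht : 0 < t) => ?_
  have := hf0 t ht
  gcongr

end Laplace

/-! ### Bernstein functions -/

section Bernstein

variable {ν : Measure ℝ} {f : ℝ → ℝ} {l : ℝ}

lemma integrableOn_one_sub_exp_neg_mul (hl : 0 < l)
    (hf : IntegrableOn (fun t => min 1 t * f t) (Ioi 0) ν) :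
    IntegrableOn (fun t => (1 - exp (-(l * t))) * f t) (Ioi 0) ν := by
  refine integrableOn_mul_of_abs_le (C := max 1 l) measurableSet_Ioi (by fun_prop) (by fun_prop)
    (fun t ht => lt_min one_pos ht) (fun t (ht : 0 < t) => ?_) hf
  have hexp : exp (-(l * t)) ≤ 1 := exp_le_one_iff.2 (by nlinarith)
  rw [abs_of_nonneg (by linarith), mul_min_of_nonneg _ _ (by positivity)]
  refine le_min ?_ ?_
  · linarith [exp_pos (-(l * t)), le_max_left 1 l]
  · nlinarith [add_one_le_exp (-(l * t)), le_max_right 1 l]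

lemma integrableOn_mul_exp_neg_mul_of_min (hl : 0 < l)
    (hf : IntegrableOn (fun t => min 1 t * f t) (Ioi 0) ν) :
    IntegrableOn (fun t => t * exp (-(l * t)) * f t) (Ioi 0) ν := by
  refine integrableOn_mul_of_abs_le (C := max 1 l⁻¹) measurableSet_Ioi (by fun_prop) (by fun_prop)
    (fun t ht => lt_min one_pos ht) (fun t (ht : 0 < t) => ?_) hf
  have hexp : exp (-(l * t)) ≤ 1 := exp_le_one_iff.2 (by nlinarith)
  rw [abs_of_pos (by positivity), mul_min_of_nonneg _ _ (by positivity)]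
  refine le_min ?_ ?_
  · linarith [mul_exp_neg_mul_le_inv hl t, le_max_right 1 l⁻¹]
  · nlinarith [le_max_left 1 l⁻¹]

lemma hasDerivAt_bernstein (hl : 0 < l)
    (hf : IntegrableOn (fun t => min 1 t * f t) (Ioi 0) ν) :
    HasDerivAt (fun x => ∫ t in Ioi 0, (1 - exp (-(x * t))) * f t ∂ν)
      (∫ t in Ioi 0, t * exp (-(l * t)) * f t ∂ν) l := by
  obtain ⟨m, hm, hml⟩ := exists_between hl
  refine hasDerivAt_integral_const_sub_exp_neg_mul hml ?_
    (integrableOn_mul_exp_neg_mul_of_min hm hf)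
  filter_upwards [Ioi_mem_nhds hl] with x hx using integrableOn_one_sub_exp_neg_mul hx hf

lemma bernstein_pos (hl : 0 < l) (hν : ν (Ioi 0) ≠ 0) (hfpos : ∀ t, 0 < t → 0 < f t)
    (hf : IntegrableOn (fun t => min 1 t * f t) (Ioi 0) ν) :
    0 < ∫ t in Ioi 0, (1 - exp (-(l * t))) * f t ∂ν := by
  refine setIntegral_pos_of_pos measurableSet_Ioi hν (fun t (ht : 0 < t) => ?_)
    (integrableOn_one_sub_exp_neg_mul hl hf)
  exact mul_pos (sub_pos.2 (exp_lt_one_iff.2 (by nlinarith))) (hfpos t ht)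

lemma bernstein_deriv_pos (hl : 0 < l) (hν : ν (Ioi 0) ≠ 0) (hfpos : ∀ t, 0 < t → 0 < f t)
    (hf : IntegrableOn (fun t => min 1 t * f t) (Ioi 0) ν) :
    0 < ∫ t in Ioi 0, t * exp (-(l * t)) * f t ∂ν := by
  refine setIntegral_pos_of_pos measurableSet_Ioi hν (fun t (ht : 0 < t) => ?_)
    (integrableOn_mul_exp_neg_mul_of_min hl hf)
  have := hfpos t ht
  positivity

end Bernstein

/-! ### Moments of a decreasing density -/

/-- The moment of order `p` of the density `u` over `(0, s]`, the quantity through which Laplace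
transforms and heat potentials of `u` are compared. -/
noncomputable def truncatedMoment (p : ℝ) (u : ℝ → ℝ) (s : ℝ) : ℝ :=
  ∫ t in Ioc 0 s, t ^ p * u t

/-- The Laplace transform of `t ↦ t ^ p * u t`. For a natural number `p` it is `(-1) ^ p` times the
`p`-th derivative of the Laplace transform of `u`; if the latter is `1 / φ`, the case `p = 1` is
`φ' / φ ^ 2`. -/
noncomputable def laplaceMoment (p : ℝ) (u : ℝ → ℝ) (l : ℝ) : ℝ :=
  ∫ t in Ioi 0, t ^ p * exp (-(l * t)) * u t

section Moments

variable {p l s : ℝ} {u : ℝ → ℝ}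

lemma integrableOn_rpow_mul_exp_neg_mul (hp : -1 < p) (hl : 0 < l) :
    IntegrableOn (fun t => t ^ p * exp (-(l * t))) (Ioi 0) := by
  simpa using integrableOn_rpow_mul_exp_neg_mul_rpow hp one_pos hl

lemma rpow_le_exp_mul_rpow_mul_exp_neg {t : ℝ} (hl : 0 ≤ l) (ht : t ∈ Ioc 0 s) :
    t ^ p ≤ exp (l * s) * (t ^ p * exp (-(l * t))) := by
  have hexp : 1 ≤ exp (l * s) * exp (-(l * t)) := by
    rw [← exp_add]
    exact one_le_exp (by nlinarith [ht.2])
  calc t ^ p ≤ t ^ p * (exp (l * s) * exp (-(l * t))) :=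
        le_mul_of_one_le_right (rpow_nonneg ht.1.le p) hexp
    _ = exp (l * s) * (t ^ p * exp (-(l * t))) := by ring

lemma integrableOn_Ioc_rpow_mul (hl : 0 ≤ l)
    (hu : IntegrableOn (fun t => t ^ p * exp (-(l * t)) * u t) (Ioi 0)) :
    IntegrableOn (fun t => t ^ p * u t) (Ioc 0 s) := by
  refine integrableOn_mul_of_abs_le (C := exp (l * s)) measurableSet_Ioc (by fun_prop)
    (by fun_prop) (fun t ht => mul_pos (rpow_pos_of_pos ht.1 p) (exp_pos _)) (fun t ht => ?_)
    (hu.mono_set Ioc_subset_Ioi_self)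
  rw [abs_of_nonneg (rpow_nonneg ht.1.le p)]
  exact rpow_le_exp_mul_rpow_mul_exp_neg hl ht

lemma truncatedMoment_le_laplaceMoment (hl : 0 ≤ l) (hu0 : ∀ t, 0 < t → 0 ≤ u t)
    (hu : IntegrableOn (fun t => t ^ p * exp (-(l * t)) * u t) (Ioi 0)) :
    truncatedMoment p u s ≤ exp (l * s) * laplaceMoment p u l := by
  have hnonneg : ∀ t, 0 < t → 0 ≤ t ^ p * exp (-(l * t)) * u t := fun t ht => by
    have := hu0 t ht
    positivity
  calc truncatedMoment p u s
      ≤ ∫ t in Ioc 0 s, exp (l * s) * (t ^ p * exp (-(l * t)) * u t) := by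
        refine setIntegral_mono_on (integrableOn_Ioc_rpow_mul hl hu)
          ((hu.mono_set Ioc_subset_Ioi_self).const_mul _) measurableSet_Ioc fun t ht => ?_
        rw [← mul_assoc]
        exact mul_le_mul_of_nonneg_right (rpow_le_exp_mul_rpow_mul_exp_neg hl ht) (hu0 t ht.1)
    _ = exp (l * s) * ∫ t in Ioc 0 s, t ^ p * exp (-(l * t)) * u t := integral_const_mul _ _
    _ ≤ exp (l * s) * laplaceMoment p u l := by
        refine mul_le_mul_of_nonneg_left ?_ (exp_pos _).le
        exact setIntegral_mono_set hu
          ((ae_restrict_mem measurableSet_Ioi).mono fun t ht => hnonneg t ht)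
          Ioc_subset_Ioi_self.eventuallyLE

lemma rpow_mul_le_truncatedMoment (hp : -1 < p) (hs : 0 < s) (hanti : AntitoneOn u (Ioi 0))
    (hu : IntegrableOn (fun t => t ^ p * u t) (Ioc 0 s)) :
    s ^ (p + 1) * u s ≤ (p + 1) * truncatedMoment p u s := by
  have hp1 : 0 < p + 1 := by linarith
  have hpow : IntegrableOn (fun t : ℝ => t ^ p) (Ioc 0 s) :=
    (intervalIntegral.intervalIntegrable_rpow' hp).1
  have hintegral : ∫ t in Ioc 0 s, t ^ p * u s = s ^ (p + 1) / (p + 1) * u s := by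
    rw [integral_mul_const, ← intervalIntegral.integral_of_le hs.le, integral_rpow (.inl hp),
      zero_rpow hp1.ne', sub_zero]
  have hle : ∫ t in Ioc 0 s, t ^ p * u s ≤ truncatedMoment p u s :=
    setIntegral_mono_on (hpow.mul_const _) hu measurableSet_Ioc fun t ht =>
      mul_le_mul_of_nonneg_left (hanti ht.1 hs ht.2) (rpow_nonneg ht.1.le p)
  rw [hintegral, div_mul_eq_mul_div, div_le_iff₀ hp1] at hle
  linarith

lemma setIntegral_Ioi_rpow_mul_exp_neg_mul_le (hp : -1 < p) (hl : 0 < l) (hs : 0 < s)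
    (hus : 0 ≤ u s) (hanti : AntitoneOn u (Ioi 0))
    (hu : IntegrableOn (fun t => t ^ p * exp (-(l * t)) * u t) (Ioi 0)) :
    ∫ t in Ioi s, t ^ p * exp (-(l * t)) * u t ≤ (1 / l) ^ (p + 1) * Gamma (p + 1) * u s := by
  have hker := integrableOn_rpow_mul_exp_neg_mul hp hl
  have hsub : Ioi s ⊆ Ioi 0 := Ioi_subset_Ioi hs.le
  calc ∫ t in Ioi s, t ^ p * exp (-(l * t)) * u t
      ≤ ∫ t in Ioi s, t ^ p * exp (-(l * t)) * u s := by
        refine setIntegral_mono_on (hu.mono_set hsub) ((hker.mono_set hsub).mul_const _)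
          measurableSet_Ioi fun t ht => ?_
        have ht0 : 0 < t := hsub ht
        exact mul_le_mul_of_nonneg_left (hanti hs ht0 (le_of_lt ht)) (by positivity)
    _ ≤ ∫ t in Ioi 0, t ^ p * exp (-(l * t)) * u s := by
        refine setIntegral_mono_set (hker.mul_const _) ?_ hsub.eventuallyLE
        filter_upwards [ae_restrict_mem measurableSet_Ioi] with t (ht : 0 < t)
        exact mul_nonneg (by positivity) hus
    _ = (1 / l) ^ (p + 1) * Gamma (p + 1) * u s := by
        rw [integral_mul_const, ← integral_rpow_mul_exp_neg_mul_Ioi (by linarith) hl,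
          add_sub_cancel_right]

lemma laplaceMoment_inv_le_truncatedMoment (hp : -1 < p) (hs : 0 < s)
    (hu0 : ∀ t, 0 < t → 0 ≤ u t) (hanti : AntitoneOn u (Ioi 0))
    (hu : IntegrableOn (fun t => t ^ p * exp (-(s⁻¹ * t)) * u t) (Ioi 0)) :
    laplaceMoment p u s⁻¹ ≤ (1 + Gamma (p + 2)) * truncatedMoment p u s := by
  have hs' : 0 < s⁻¹ := inv_pos.2 hs
  have hmoment : IntegrableOn (fun t => t ^ p * u t) (Ioc 0 s) :=
    integrableOn_Ioc_rpow_mul hs'.le hu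
  have hhead : ∫ t in Ioc 0 s, t ^ p * exp (-(s⁻¹ * t)) * u t ≤ truncatedMoment p u s := by
    refine setIntegral_mono_on (hu.mono_set Ioc_subset_Ioi_self) hmoment measurableSet_Ioc
      fun t ht => mul_le_mul_of_nonneg_right ?_ (hu0 t ht.1)
    refine mul_le_of_le_one_right (rpow_nonneg ht.1.le p) (exp_le_one_iff.2 ?_)
    exact neg_nonpos.2 (mul_nonneg hs'.le ht.1.le)
  have htail : ∫ t in Ioi s, t ^ p * exp (-(s⁻¹ * t)) * u t ≤
      Gamma (p + 2) * truncatedMoment p u s := by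
    have hΓ : Gamma (p + 2) = (p + 1) * Gamma (p + 1) := by
      rw [← Gamma_add_one (by linarith : p + 1 ≠ 0)]
      ring_nf
    calc ∫ t in Ioi s, t ^ p * exp (-(s⁻¹ * t)) * u t
        ≤ Gamma (p + 1) * (s ^ (p + 1) * u s) := by
          refine (setIntegral_Ioi_rpow_mul_exp_neg_mul_le hp hs' hs (hu0 s hs) hanti hu).trans_eq ?_
          rw [one_div, inv_inv]
          ring
      _ ≤ Gamma (p + 1) * ((p + 1) * truncatedMoment p u s) :=
          mul_le_mul_of_nonneg_left (rpow_mul_le_truncatedMoment hp hs hanti hmoment)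
            (Gamma_pos_of_pos (by linarith)).le
      _ = Gamma (p + 2) * truncatedMoment p u s := by rw [hΓ]; ring
  rw [laplaceMoment, ← Ioc_union_Ioi_eq_Ioi hs.le, setIntegral_union (Ioc_disjoint_Ioi le_rfl)
    measurableSet_Ioi (hu.mono_set Ioc_subset_Ioi_self) (hu.mono_set (Ioi_subset_Ioi hs.le))]
  linarith

lemma laplaceMoment_inv_le_truncatedMoment_sub {ε : ℝ} (hp : -1 < p) (hs : 0 < s) (hε : 0 < ε)
    (hu0 : ∀ t, 0 < t → 0 ≤ u t) (hanti : AntitoneOn u (Ioi 0))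
    (hu : ∀ l, 0 < l → IntegrableOn (fun t => t ^ p * exp (-(l * t)) * u t) (Ioi 0))
    (hscale : laplaceMoment p u (ε⁻¹ * s⁻¹) ≤
      (2 * (1 + Gamma (p + 2)) * exp 1)⁻¹ * laplaceMoment p u s⁻¹) :
    laplaceMoment p u s⁻¹ ≤
      2 * (1 + Gamma (p + 2)) * (truncatedMoment p u s - truncatedMoment p u (ε * s)) := by
  have hΓ : 0 < 1 + Gamma (p + 2) := by
    have := Gamma_pos_of_pos (by linarith : 0 < p + 2)
    positivity
  have hfull := laplaceMoment_inv_le_truncatedMoment hp hs hu0 hanti (hu _ (inv_pos.2 hs))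
  have hsmall : 2 * (1 + Gamma (p + 2)) * truncatedMoment p u (ε * s) ≤ laplaceMoment p u s⁻¹ := by
    have hl : 0 < ε⁻¹ * s⁻¹ := by positivity
    have hone : ε⁻¹ * s⁻¹ * (ε * s) = 1 := by field_simp
    have hle := truncatedMoment_le_laplaceMoment (s := ε * s) hl.le hu0 (hu _ hl)
    rw [hone] at hle
    calc 2 * (1 + Gamma (p + 2)) * truncatedMoment p u (ε * s)
        ≤ 2 * (1 + Gamma (p + 2)) * (exp 1 *
          ((2 * (1 + Gamma (p + 2)) * exp 1)⁻¹ * laplaceMoment p u s⁻¹)) := by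
          gcongr
          exact hle.trans (by gcongr)
      _ = laplaceMoment p u s⁻¹ := by field_simp
  linarith

end Moments

/-! ### Gaussian averages -/

/-- The heat kernel in dimension `d` at time `t` and at squared distance `s` from its pole. The
dimension is allowed to be any real number. -/
noncomputable def heatKernel (d s t : ℝ) : ℝ :=
  (4 * π * t) ^ (-d / 2) * exp (-(s / (4 * t)))

/-- The potential of the heat kernel with respect to the density `u` on the time axis, as a
function of the squared distance `s`: if `u` is the potential density of a subordinator, the Green
function of the subordinate Brownian motion has radial profile `r ↦ heatPotential d u (r ^ 2)`. -/
noncomputable def heatPotential (d : ℝ) (u : ℝ → ℝ) (s : ℝ) : ℝ :=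
  ∫ t in Ioi 0, heatKernel d s t * u t

section HeatKernel

variable {d q s t ε : ℝ}

lemma heatKernel_pos (ht : 0 < t) : 0 < heatKernel d s t := by
  unfold heatKernel
  positivity

lemma measurable_heatKernel (d s : ℝ) : Measurable (heatKernel d s) := by
  unfold heatKernel
  fun_prop

lemma heatKernel_eq (q : ℝ) (hs : 0 < s) (ht : 0 < t) :
    heatKernel d s t = (4 * π) ^ (-d / 2) * ((s / t) ^ q * exp (-(1 / 4 * (s / t)))) *
      (s ^ (-q) * t ^ (q - d / 2)) := by
  have hpow : t ^ (-d / 2) = (s / t) ^ q * (s ^ (-q) * t ^ (q - d / 2)) := by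
    rw [div_rpow hs.le ht.le, rpow_neg hs.le, show q - d / 2 = q + -d / 2 by ring, rpow_add ht]
    field_simp
  have hexp : s / (4 * t) = 1 / 4 * (s / t) := by field_simp
  rw [heatKernel, mul_rpow (by positivity) ht.le, hpow, hexp]
  ring

lemma heatKernel_le (hq : 0 ≤ q) (hs : 0 < s) (ht : 0 < t) :
    heatKernel d s t ≤ (4 * π) ^ (-d / 2) * (4 * q) ^ q * (s ^ (-q) * t ^ (q - d / 2)) := by
  have hbound : (s / t) ^ q * exp (-(1 / 4 * (s / t))) ≤ (4 * q) ^ q := by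
    have h := ProbabilityTheory.rpow_abs_le_mul_exp_abs (s / t) hq (by norm_num : (1 / 4 : ℝ) ≠ 0)
    rw [abs_of_pos (by positivity), abs_of_pos (by norm_num),
      show q / (1 / 4) = 4 * q by ring] at h
    rwa [exp_neg, ← div_eq_mul_inv, div_le_iff₀ (exp_pos _)]
  rw [heatKernel_eq q hs ht]
  gcongr

lemma le_heatKernel (hq : 0 ≤ q) (hs : 0 < s) (hε : 0 < ε) (ht : t ∈ Ioc (ε * s) s) :
    (4 * π) ^ (-d / 2) * exp (-(1 / (4 * ε))) * (s ^ (-q) * t ^ (q - d / 2)) ≤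
      heatKernel d s t := by
  have ht0 : 0 < t := (mul_pos hε hs).trans ht.1
  have hone : 1 ≤ (s / t) ^ q := one_le_rpow ((one_le_div ht0).2 ht.2) hq
  have hexp : exp (-(1 / (4 * ε))) ≤ exp (-(1 / 4 * (s / t))) := by
    refine exp_le_exp.2 (neg_le_neg ?_)
    rw [div_mul_div_comm, one_mul, div_le_div_iff₀ (by positivity) (by positivity)]
    nlinarith [ht.1]
  rw [heatKernel_eq q hs ht0]
  gcongr
  exact hexp.trans (le_mul_of_one_le_left (exp_pos _).le hone)

end HeatKernel

section HeatPotential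

variable {d p s ε : ℝ} {u : ℝ → ℝ}

lemma integrableOn_Ioc_heatKernel_mul (hs : 0 < s) (hp : 0 ≤ d / 2 + p)
    (hu : IntegrableOn (fun t => t ^ p * u t) (Ioc 0 s)) :
    IntegrableOn (fun t => heatKernel d s t * u t) (Ioc 0 s) := by
  refine integrableOn_mul_of_abs_le
    (C := (4 * π) ^ (-d / 2) * (4 * (d / 2 + p)) ^ (d / 2 + p) * s ^ (-(d / 2 + p)))
    measurableSet_Ioc (measurable_heatKernel d s) (by fun_prop)
    (fun t ht => rpow_pos_of_pos ht.1 p) (fun t ht => ?_) hu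
  rw [abs_of_pos (heatKernel_pos ht.1), mul_assoc]
  simpa using heatKernel_le (d := d) hp hs ht.1

lemma setIntegral_Ioc_heatKernel_mul_le (hs : 0 < s) (hp : 0 ≤ d / 2 + p)
    (hu0 : ∀ t, 0 < t → 0 ≤ u t) (hu : IntegrableOn (fun t => t ^ p * u t) (Ioc 0 s)) :
    ∫ t in Ioc 0 s, heatKernel d s t * u t ≤
      (4 * π) ^ (-d / 2) * (4 * (d / 2 + p)) ^ (d / 2 + p) *
        (s ^ (-(d / 2 + p)) * truncatedMoment p u s) := by
  rw [← mul_assoc, truncatedMoment, ← integral_const_mul]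
  refine setIntegral_mono_on (integrableOn_Ioc_heatKernel_mul hs hp hu) (hu.const_mul _)
    measurableSet_Ioc fun t ht => ?_
  rw [← mul_assoc, mul_assoc _ _ (t ^ p)]
  refine mul_le_mul_of_nonneg_right ?_ (hu0 t ht.1)
  simpa using heatKernel_le (d := d) hp hs ht.1

lemma heatKernel_mul_le_of_lt {t : ℝ} (hs : 0 < s) (hst : s < t) (hut : 0 ≤ u t)
    (hanti : AntitoneOn u (Ioi 0)) :
    heatKernel d s t * u t ≤ (4 * π) ^ (-d / 2) * t ^ (-d / 2) * u s := by
  have ht : 0 < t := hs.trans hst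
  have hker : heatKernel d s t ≤ (4 * π) ^ (-d / 2) * t ^ (-d / 2) := by
    simpa [neg_div] using heatKernel_le (d := d) le_rfl hs ht
  exact mul_le_mul hker (hanti hs ht hst.le) hut (by positivity)

lemma integrableOn_Ioi_heatKernel_mul (hd : 2 < d) (hs : 0 < s) (hu0 : ∀ t, 0 < t → 0 ≤ u t)
    (hanti : AntitoneOn u (Ioi 0)) : IntegrableOn (fun t => heatKernel d s t * u t) (Ioi s) := by
  have hpow : IntegrableOn (fun t : ℝ => t ^ (-d / 2)) (Ioi s) :=
    integrableOn_Ioi_rpow_of_lt (by linarith) hs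
  have hmeas : AEStronglyMeasurable u (volume.restrict (Ioi s)) :=
    (aemeasurable_restrict_of_antitoneOn measurableSet_Ioi
      (hanti.mono (Ioi_subset_Ioi hs.le))).aestronglyMeasurable
  refine Integrable.mono' ((hpow.const_mul ((4 * π) ^ (-d / 2))).mul_const (u s))
    ((measurable_heatKernel d s).aestronglyMeasurable.mul hmeas) ?_
  filter_upwards [ae_restrict_mem measurableSet_Ioi] with t (hst : s < t)
  have ht : 0 < t := hs.trans hst
  rw [norm_of_nonneg (mul_nonneg (heatKernel_pos ht).le (hu0 t ht))]
  exact heatKernel_mul_le_of_lt hs hst (hu0 t ht) hanti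

lemma setIntegral_Ioi_heatKernel_mul_le (hd : 2 < d) (hs : 0 < s) (hu0 : ∀ t, 0 < t → 0 ≤ u t)
    (hanti : AntitoneOn u (Ioi 0)) :
    ∫ t in Ioi s, heatKernel d s t * u t ≤
      (4 * π) ^ (-d / 2) / (d / 2 - 1) * (s ^ (1 - d / 2) * u s) := by
  have hpow : IntegrableOn (fun t : ℝ => t ^ (-d / 2)) (Ioi s) :=
    integrableOn_Ioi_rpow_of_lt (by linarith) hs
  calc ∫ t in Ioi s, heatKernel d s t * u t
      ≤ ∫ t in Ioi s, (4 * π) ^ (-d / 2) * t ^ (-d / 2) * u s :=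
        setIntegral_mono_on (integrableOn_Ioi_heatKernel_mul hd hs hu0 hanti)
          ((hpow.const_mul _).mul_const _) measurableSet_Ioi fun t ht =>
            heatKernel_mul_le_of_lt hs ht (hu0 t (hs.trans ht)) hanti
    _ = (4 * π) ^ (-d / 2) * (-s ^ (-d / 2 + 1) / (-d / 2 + 1)) * u s := by
        rw [integral_mul_const, integral_const_mul, integral_Ioi_rpow_of_lt (by linarith) hs]
    _ = (4 * π) ^ (-d / 2) / (d / 2 - 1) * (s ^ (1 - d / 2) * u s) := by
        rw [show -d / 2 + 1 = -(d / 2 - 1) by ring, show 1 - d / 2 = -(d / 2 - 1) by ring,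
          neg_div_neg_eq]
        ring

lemma integrableOn_heatKernel_mul (hd : 2 < d) (hs : 0 < s) (hp : 0 ≤ d / 2 + p)
    (hu0 : ∀ t, 0 < t → 0 ≤ u t) (hanti : AntitoneOn u (Ioi 0))
    (hu : IntegrableOn (fun t => t ^ p * u t) (Ioc 0 s)) :
    IntegrableOn (fun t => heatKernel d s t * u t) (Ioi 0) := by
  rw [← Ioc_union_Ioi_eq_Ioi hs.le]
  exact (integrableOn_Ioc_heatKernel_mul hs hp hu).union
    (integrableOn_Ioi_heatKernel_mul hd hs hu0 hanti)

lemma heatPotential_le (hd : 2 < d) (hp : -1 < p) (hs : 0 < s)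
    (hu0 : ∀ t, 0 < t → 0 ≤ u t) (hanti : AntitoneOn u (Ioi 0))
    (hu : IntegrableOn (fun t => t ^ p * u t) (Ioc 0 s)) :
    heatPotential d u s ≤
      (4 * π) ^ (-d / 2) * ((4 * (d / 2 + p)) ^ (d / 2 + p) + (p + 1) / (d / 2 - 1)) *
        (s ^ (-(d / 2 + p)) * truncatedMoment p u s) := by
  have hq : 0 ≤ d / 2 + p := by linarith
  have hd' : 0 < d / 2 - 1 := by linarith
  have hhead := setIntegral_Ioc_heatKernel_mul_le hs hq hu0 hu
  have htail : ∫ t in Ioi s, heatKernel d s t * u t ≤ (4 * π) ^ (-d / 2) *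
      ((p + 1) / (d / 2 - 1)) * (s ^ (-(d / 2 + p)) * truncatedMoment p u s) :=
    calc ∫ t in Ioi s, heatKernel d s t * u t
        ≤ (4 * π) ^ (-d / 2) / (d / 2 - 1) * (s ^ (1 - d / 2) * u s) :=
          setIntegral_Ioi_heatKernel_mul_le hd hs hu0 hanti
      _ = (4 * π) ^ (-d / 2) / (d / 2 - 1) * (s ^ (-(d / 2 + p)) * (s ^ (p + 1) * u s)) := by
          rw [← mul_assoc (s ^ (-(d / 2 + p))), ← rpow_add hs]
          ring_nf
      _ ≤ (4 * π) ^ (-d / 2) / (d / 2 - 1) *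
          (s ^ (-(d / 2 + p)) * ((p + 1) * truncatedMoment p u s)) := by
          gcongr _ * (_ * ?_)
          exact rpow_mul_le_truncatedMoment hp hs hanti hu
      _ = _ := by ring
  rw [heatPotential, ← Ioc_union_Ioi_eq_Ioi hs.le, setIntegral_union (Ioc_disjoint_Ioi le_rfl)
    measurableSet_Ioi (integrableOn_Ioc_heatKernel_mul hs hq hu)
    (integrableOn_Ioi_heatKernel_mul hd hs hu0 hanti)]
  linarith

lemma truncatedMoment_sub {r : ℝ} (hr : 0 ≤ r) (hrs : r ≤ s)
    (hu : IntegrableOn (fun t => t ^ p * u t) (Ioc 0 s)) :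
    truncatedMoment p u s - truncatedMoment p u r = ∫ t in Ioc r s, t ^ p * u t := by
  rw [sub_eq_iff_eq_add', truncatedMoment, truncatedMoment, ← Ioc_union_Ioc_eq_Ioc hr hrs]
  exact setIntegral_union (Ioc_disjoint_Ioc_of_le le_rfl) measurableSet_Ioc
    (hu.mono_set (Ioc_subset_Ioc_right hrs)) (hu.mono_set (Ioc_subset_Ioc_left hr))

lemma le_heatPotential (hp : 0 ≤ d / 2 + p) (hs : 0 < s) (hε : 0 < ε) (hε1 : ε ≤ 1)
    (hu0 : ∀ t, 0 < t → 0 ≤ u t) (hu : IntegrableOn (fun t => t ^ p * u t) (Ioc 0 s))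
    (hker : IntegrableOn (fun t => heatKernel d s t * u t) (Ioi 0)) :
    (4 * π) ^ (-d / 2) * exp (-(1 / (4 * ε))) *
        (s ^ (-(d / 2 + p)) * (truncatedMoment p u s - truncatedMoment p u (ε * s))) ≤
      heatPotential d u s := by
  have hεs : 0 < ε * s := mul_pos hε hs
  have hsub : Ioc (ε * s) s ⊆ Ioc 0 s := Ioc_subset_Ioc_left hεs.le
  have hsub' : Ioc (ε * s) s ⊆ Ioi 0 := hsub.trans Ioc_subset_Ioi_self
  rw [truncatedMoment_sub hεs.le (mul_le_of_le_one_left hs.le hε1) hu, ← mul_assoc,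
    ← integral_const_mul]
  calc ∫ t in Ioc (ε * s) s, (4 * π) ^ (-d / 2) * exp (-(1 / (4 * ε))) * s ^ (-(d / 2 + p)) *
        (t ^ p * u t)
      ≤ ∫ t in Ioc (ε * s) s, heatKernel d s t * u t := by
        refine setIntegral_mono_on ((hu.mono_set hsub).const_mul _) (hker.mono_set hsub')
          measurableSet_Ioc fun t ht => ?_
        rw [← mul_assoc, mul_assoc _ _ (t ^ p)]
        refine mul_le_mul_of_nonneg_right ?_ (hu0 t (hsub' ht))
        simpa using le_heatKernel (d := d) hp hs hε ht
    _ ≤ heatPotential d u s := by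
        refine setIntegral_mono_set hker ?_ hsub'.eventuallyLE
        filter_upwards [ae_restrict_mem measurableSet_Ioi] with t ht
        exact mul_nonneg (heatKernel_pos ht).le (hu0 t ht)

end HeatPotential

/-! ### Comparison of heat potentials with Laplace transforms -/

section Comparison

variable {d p s x θ ε : ℝ} {u : ℝ → ℝ}

lemma laplaceMoment_nonneg (hu0 : ∀ t, 0 < t → 0 ≤ u t) (l : ℝ) : 0 ≤ laplaceMoment p u l :=
  setIntegral_nonneg measurableSet_Ioi fun t (ht : 0 < t) =>
    mul_nonneg (by positivity) (hu0 t ht)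

lemma heatPotential_le_laplaceMoment (hd : 2 < d) (hp : -1 < p) (hs : 0 < s)
    (hu0 : ∀ t, 0 < t → 0 ≤ u t) (hanti : AntitoneOn u (Ioi 0))
    (hu : IntegrableOn (fun t => t ^ p * exp (-(s⁻¹ * t)) * u t) (Ioi 0)) :
    heatPotential d u s ≤
      (4 * π) ^ (-d / 2) * ((4 * (d / 2 + p)) ^ (d / 2 + p) + (p + 1) / (d / 2 - 1)) * exp 1 *
        (s ^ (-(d / 2 + p)) * laplaceMoment p u s⁻¹) := by
  have hs' : 0 ≤ s⁻¹ := inv_nonneg.2 hs.le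
  have hmoment : truncatedMoment p u s ≤ exp 1 * laplaceMoment p u s⁻¹ := by
    simpa [hs.ne'] using truncatedMoment_le_laplaceMoment (s := s) hs' hu0 hu
  have hq : 0 ≤ d / 2 + p := by linarith
  have hratio : 0 ≤ (p + 1) / (d / 2 - 1) := div_nonneg (by linarith) (by linarith)
  refine (heatPotential_le hd hp hs hu0 hanti (integrableOn_Ioc_rpow_mul hs' hu)).trans ?_
  rw [mul_assoc _ (exp 1), mul_left_comm (exp 1)]
  gcongr

lemma laplaceMoment_le_heatPotential (hd : 2 < d) (hp : -1 < p) (hs : 0 < s) (hε : 0 < ε)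
    (hε1 : ε ≤ 1) (hu0 : ∀ t, 0 < t → 0 ≤ u t) (hanti : AntitoneOn u (Ioi 0))
    (hu : ∀ l, 0 < l → IntegrableOn (fun t => t ^ p * exp (-(l * t)) * u t) (Ioi 0))
    (hscale : laplaceMoment p u (ε⁻¹ * s⁻¹) ≤
      (2 * (1 + Gamma (p + 2)) * exp 1)⁻¹ * laplaceMoment p u s⁻¹) :
    (4 * π) ^ (-d / 2) * exp (-(1 / (4 * ε))) / (2 * (1 + Gamma (p + 2))) *
        (s ^ (-(d / 2 + p)) * laplaceMoment p u s⁻¹) ≤ heatPotential d u s := by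
  have hΓ : 0 < Gamma (p + 2) := Gamma_pos_of_pos (by linarith)
  have hq : 0 ≤ d / 2 + p := by linarith
  have hmoment : IntegrableOn (fun t => t ^ p * u t) (Ioc 0 s) :=
    integrableOn_Ioc_rpow_mul (inv_nonneg.2 hs.le) (hu _ (inv_pos.2 hs))
  calc (4 * π) ^ (-d / 2) * exp (-(1 / (4 * ε))) / (2 * (1 + Gamma (p + 2))) *
        (s ^ (-(d / 2 + p)) * laplaceMoment p u s⁻¹)
      ≤ (4 * π) ^ (-d / 2) * exp (-(1 / (4 * ε))) / (2 * (1 + Gamma (p + 2))) *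
        (s ^ (-(d / 2 + p)) * (2 * (1 + Gamma (p + 2)) *
          (truncatedMoment p u s - truncatedMoment p u (ε * s)))) := by
        gcongr
        exact laplaceMoment_inv_le_truncatedMoment_sub hp hs hε hu0 hanti hu hscale
    _ = (4 * π) ^ (-d / 2) * exp (-(1 / (4 * ε))) *
        (s ^ (-(d / 2 + p)) * (truncatedMoment p u s - truncatedMoment p u (ε * s))) := by
        field_simp
    _ ≤ heatPotential d u s := le_heatPotential hq hs hε hε1 hu0 hmoment
        (integrableOn_heatKernel_mul hd hs hq hu0 hanti hmoment)

lemma eventually_pow_mul_le {f : ℝ → ℝ} (hx : 0 < x) (hθ : 0 ≤ θ)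
    (h : ∀ᶠ l in atTop, f (x * l) ≤ θ * f l) (n : ℕ) :
    ∀ᶠ l in atTop, f (x ^ n * l) ≤ θ ^ n * f l := by
  induction n with
  | zero => simp
  | succ n ih =>
    filter_upwards [h, (tendsto_id.const_mul_atTop hx).eventually ih] with l hl hn
    calc f (x ^ (n + 1) * l) = f (x ^ n * (x * l)) := by ring_nf
      _ ≤ θ ^ n * f (x * l) := hn
      _ ≤ θ ^ n * (θ * f l) := by gcongr
      _ = θ ^ (n + 1) * f l := by ring

lemma exists_eventually_laplaceMoment_bounds_heatPotential (hd : 2 < d) (hp : -1 < p)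
    (hx : 1 < x) (hθ0 : 0 ≤ θ) (hθ1 : θ < 1) (hu0 : ∀ t, 0 < t → 0 ≤ u t)
    (hanti : AntitoneOn u (Ioi 0))
    (hu : ∀ l, 0 < l → IntegrableOn (fun t => t ^ p * exp (-(l * t)) * u t) (Ioi 0))
    (hscale : ∀ᶠ l in atTop, laplaceMoment p u (x * l) ≤ θ * laplaceMoment p u l) :
    ∃ c C, 0 < c ∧ c ≤ C ∧ ∀ᶠ s in 𝓝[>] 0,
      c * (s ^ (-(d / 2 + p)) * laplaceMoment p u s⁻¹) ≤ heatPotential d u s ∧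
      heatPotential d u s ≤ C * (s ^ (-(d / 2 + p)) * laplaceMoment p u s⁻¹) := by
  have hΓ : 0 < Gamma (p + 2) := Gamma_pos_of_pos (by linarith)
  obtain ⟨n, hn⟩ := exists_pow_lt_of_lt_one
    (by positivity : 0 < (2 * (1 + Gamma (p + 2)) * exp 1)⁻¹) hθ1
  have hx0 : 0 < x := one_pos.trans hx
  refine ⟨(4 * π) ^ (-d / 2) * exp (-(1 / (4 * (x ^ n)⁻¹))) / (2 * (1 + Gamma (p + 2))), _,
    by positivity, le_max_left _ ((4 * π) ^ (-d / 2) *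
      ((4 * (d / 2 + p)) ^ (d / 2 + p) + (p + 1) / (d / 2 - 1)) * exp 1), ?_⟩
  filter_upwards [self_mem_nhdsWithin, tendsto_inv_nhdsGT_zero.eventually
    (eventually_pow_mul_le hx0 hθ0 hscale n)] with s (hs : 0 < s) hpow
  have hL := laplaceMoment_nonneg (p := p) hu0 s⁻¹
  refine ⟨laplaceMoment_le_heatPotential hd hp hs (by positivity)
    (inv_le_one_of_one_le₀ (one_le_pow₀ hx.le)) hu0 hanti hu ?_, ?_⟩
  · rw [inv_inv]
    exact hpow.trans (by gcongr)
  · refine (heatPotential_le_laplaceMoment hd hp hs hu0 hanti (hu _ (inv_pos.2 hs))).trans ?_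
    gcongr
    exact le_max_right _ _

end Comparison

/-! ### Laplace exponents and their potential densities -/

section LaplaceExponent

variable {x θ l m : ℝ} {φ φ' u : ℝ → ℝ}

lemma integrableOn_exp_neg_mul_of_laplace_eq (hl : 0 < l) (hφpos : ∀ l, 0 < l → 0 < φ l)
    (hu : ∀ l, 0 < l → ∫ t in Ioi 0, exp (-(l * t)) * u t = 1 / φ l) :
    IntegrableOn (fun t => exp (-(l * t)) * u t) (Ioi 0) :=
  Integrable.of_integral_ne_zero (by rw [hu l hl]; exact (one_div_pos.2 (hφpos l hl)).ne')

lemma integrableOn_rpow_one_mul_exp_neg_mul (hl : 0 < l) (hφpos : ∀ l, 0 < l → 0 < φ l)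
    (hu : ∀ l, 0 < l → ∫ t in Ioi 0, exp (-(l * t)) * u t = 1 / φ l) :
    IntegrableOn (fun t => t ^ (1 : ℝ) * exp (-(l * t)) * u t) (Ioi 0) := by
  obtain ⟨m, hm, hml⟩ := exists_between hl
  simpa using integrableOn_mul_exp_neg_mul hml (integrableOn_exp_neg_mul_of_laplace_eq hm hφpos hu)

lemma laplaceMoment_one_eq (hl : 0 < l) (hφpos : ∀ l, 0 < l → 0 < φ l)
    (hφ' : HasDerivAt φ (φ' l) l)
    (hu : ∀ l, 0 < l → ∫ t in Ioi 0, exp (-(l * t)) * u t = 1 / φ l) :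
    laplaceMoment 1 u l = φ' l / φ l ^ 2 := by
  obtain ⟨m, hm, hml⟩ := exists_between hl
  have hlaplace : HasDerivAt (fun x => ∫ t in Ioi 0, exp (-(x * t)) * u t)
      (-φ' l / φ l ^ 2) l := by
    refine (hφ'.fun_inv (hφpos l hl).ne').congr_of_eventuallyEq ?_
    filter_upwards [Ioi_mem_nhds hl] with x hx
    rw [hu x hx, one_div]
  have hunique :=
    (hasDerivAt_laplace hml (integrableOn_exp_neg_mul_of_laplace_eq hm hφpos hu)).unique hlaplace
  simp only [laplaceMoment, rpow_one]
  linarith [neg_div (φ l ^ 2) (φ' l)]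

lemma le_of_laplace_eq_one_div (hm : 0 < m) (hml : m ≤ l) (hφpos : ∀ l, 0 < l → 0 < φ l)
    (hu0 : ∀ t, 0 < t → 0 ≤ u t)
    (hu : ∀ l, 0 < l → ∫ t in Ioi 0, exp (-(l * t)) * u t = 1 / φ l) : φ m ≤ φ l := by
  have hl : 0 < l := hm.trans_le hml
  have h := laplace_le_of_le hml hu0 (integrableOn_exp_neg_mul_of_laplace_eq hm hφpos hu)
  rwa [hu l hl, hu m hm, one_div_le_one_div (hφpos l hl) (hφpos m hm)] at h

lemma eventually_laplaceMoment_one_mul_le (hx : 1 ≤ x) (hφpos : ∀ l, 0 < l → 0 < φ l)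
    (hφ' : ∀ l, 0 < l → HasDerivAt φ (φ' l) l)
    (hscale : ∀ᶠ l in atTop, φ' (x * l) ≤ θ * φ' l) (hu0 : ∀ t, 0 < t → 0 ≤ u t)
    (hu : ∀ l, 0 < l → ∫ t in Ioi 0, exp (-(l * t)) * u t = 1 / φ l) :
    ∀ᶠ l in atTop, laplaceMoment 1 u (x * l) ≤ θ * laplaceMoment 1 u l := by
  filter_upwards [hscale, eventually_gt_atTop 0] with l hle hl
  have hxl : l ≤ x * l := le_mul_of_one_le_left hl.le hx
  have hxl0 : 0 < x * l := hl.trans_le hxl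
  have hφ0 := hφpos l hl
  have hmono : φ l ≤ φ (x * l) := le_of_laplace_eq_one_div hl hxl hφpos hu0 hu
  have hratio := laplaceMoment_one_eq hxl0 hφpos (hφ' _ hxl0) hu
  have hφ'_nonneg : 0 ≤ φ' (x * l) := by
    have := laplaceMoment_nonneg (p := 1) hu0 (x * l)
    rwa [hratio, le_div_iff₀ (by positivity [hφpos _ hxl0]), zero_mul] at this
  rw [hratio, laplaceMoment_one_eq hl hφpos (hφ' l hl) hu, ← mul_div_assoc]
  exact div_le_div₀ (hφ'_nonneg.trans hle) hle (by positivity) (by gcongr)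

end LaplaceExponent

theorem sbm_green_asymp_general {d x θ : ℝ} {φ φ' u g : ℝ → ℝ} (hd : 2 < d) (hx : 1 < x)
    (hθ0 : 0 ≤ θ) (hθ1 : θ < 1) (hφpos : ∀ l, 0 < l → 0 < φ l)
    (hφ' : ∀ l, 0 < l → HasDerivAt φ (φ' l) l)
    (hscale : ∀ᶠ l in atTop, φ' (x * l) ≤ θ * φ' l)
    (hu0 : ∀ t, 0 < t → 0 ≤ u t) (hanti : AntitoneOn u (Ioi 0))
    (hu : ∀ l, 0 < l → ∫ t in Ioi 0, exp (-(l * t)) * u t = 1 / φ l)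
    (hg : ∀ r, 0 < r → g r = heatPotential d u (r ^ 2)) :
    ∃ c C r₀ : ℝ, 0 < c ∧ c ≤ C ∧ 0 < r₀ ∧ ∀ r, 0 < r → r < r₀ →
      c * (r ^ (-d - 2) * φ' (r ^ (-2 : ℝ)) / φ (r ^ (-2 : ℝ)) ^ 2) ≤ g r ∧
      g r ≤ C * (r ^ (-d - 2) * φ' (r ^ (-2 : ℝ)) / φ (r ^ (-2 : ℝ)) ^ 2) := by
  obtain ⟨c, C, hc, hcC, hbounds⟩ := exists_eventually_laplaceMoment_bounds_heatPotential
    (p := 1) hd (by norm_num) hx hθ0 hθ1 hu0 hanti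
    (fun l hl => integrableOn_rpow_one_mul_exp_neg_mul hl hφpos hu)
    (eventually_laplaceMoment_one_mul_le hx.le hφpos hφ' hscale hu0 hu)
  obtain ⟨s₀, hs₀, hbounds⟩ := mem_nhdsGT_iff_exists_Ioo_subset.1 hbounds
  refine ⟨c, C, √s₀, hc, hcC, sqrt_pos.2 hs₀, fun r hr hr₀ => ?_⟩
  have hinv : r ^ (-2 : ℝ) = (r ^ 2)⁻¹ := by rw [rpow_neg hr.le, rpow_two]
  have hpow : r ^ (-d - 2) = (r ^ 2) ^ (-(d / 2 + 1)) := by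
    rw [← rpow_natCast_mul hr.le]
    push_cast
    ring_nf
  have hs : 0 < (r ^ 2)⁻¹ := by positivity
  rw [hg r hr, hinv, hpow, mul_div_assoc, ← laplaceMoment_one_eq hs hφpos (hφ' _ hs) hu]
  exact hbounds ⟨by positivity, (lt_sqrt hr.le).1 hr₀⟩

end

/-- Under (A-1) with `α ∈ [0,2)` and (A-3), the Green function profile of the subordinate
Brownian motion satisfies `g(r) ≍ r^{-d-2} φ'(r⁻²)/φ(r⁻²)²` as `r → 0+`. -/
theorem sbm_green_asymp
    (d : ℕ) (hd : 3 ≤ d)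
    (α : ℝ) (hα0 : 0 ≤ α) (hα2 : α < 2)
    (μ φ φ' : ℝ → ℝ)
    (hμpos : ∀ t, 0 < t → 0 < μ t)
    (hμdec : ∀ s t, 0 < s → s ≤ t → μ t ≤ μ s)
    (hμint : IntegrableOn (fun t => min 1 t * μ t) (Ioi 0))
    (hφ : ∀ l, 0 < l → φ l = ∫ t in Ioi (0:ℝ), (1 - Real.exp (-(l * t))) * μ t)
    (hφ' : ∀ l, 0 < l → φ' l = ∫ t in Ioi (0:ℝ), t * Real.exp (-(l * t)) * μ t)
    (hA1 : ∀ x, 0 < x →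
      Tendsto (fun l => φ' (l * x) / φ' l) atTop (𝓝 (x ^ (α / 2 - 1))))
    (u : ℝ → ℝ)
    (hupos : ∀ t, 0 < t → 0 < u t)
    (hudec : ∀ s t, 0 < s → s ≤ t → u t ≤ u s)
    (hu : ∀ l, 0 < l → ∫ t in Ioi (0:ℝ), Real.exp (-(l * t)) * u t = 1 / φ l)
    (g : ℝ → ℝ)
    (hg : ∀ r, 0 < r → g r =
      ∫ t in Ioi (0:ℝ), (4 * Real.pi * t) ^ (-(d:ℝ) / 2) * Real.exp (-(r ^ 2 / (4 * t))) * u t) :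
    ∃ c C r₀ : ℝ, 0 < c ∧ c ≤ C ∧ 0 < r₀ ∧ ∀ r, 0 < r → r < r₀ →
      c * (r ^ (-(d:ℝ) - 2) * φ' (r ^ (-2 : ℝ)) / φ (r ^ (-2 : ℝ)) ^ 2) ≤ g r ∧
      g r ≤ C * (r ^ (-(d:ℝ) - 2) * φ' (r ^ (-2 : ℝ)) / φ (r ^ (-2 : ℝ)) ^ 2) := by
  have hvol : volume (Ioi (0 : ℝ)) ≠ 0 := by simp
  have hφpos : ∀ l, 0 < l → 0 < φ l := fun l hl => by
    rw [hφ l hl]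
    exact bernstein_pos hl hvol hμpos hμint
  have hderiv : ∀ l, 0 < l → HasDerivAt φ (φ' l) l := fun l hl => by
    rw [hφ' l hl]
    exact (hasDerivAt_bernstein hl hμint).congr_of_eventuallyEq
      (eventually_of_mem (Ioi_mem_nhds hl) hφ)
  obtain ⟨θ, hθ, hθ1⟩ := exists_between
    (Real.rpow_lt_one_of_one_lt_of_neg one_lt_two (by linarith : α / 2 - 1 < 0))
  have hscale : ∀ᶠ l in atTop, φ' (2 * l) ≤ θ * φ' l := by
    filter_upwards [(hA1 2 two_pos).eventually_le_const hθ, eventually_gt_atTop 0] with l hle hl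
    have hφ'_pos : 0 < φ' l := by
      rw [hφ' l hl]
      exact bernstein_deriv_pos hl hvol hμpos hμint
    rwa [div_le_iff₀ hφ'_pos, mul_comm l] at hle
  exact sbm_green_asymp_general (by exact_mod_cast hd) one_lt_two
    ((Real.rpow_nonneg zero_le_two _).trans hθ.le) hθ1 hφpos hderiv hscale
    (fun t ht => (hupos t ht).le) (fun s hs t _ hst => hudec s t hs hst) hu hg
end

section
/- Let d ≥ 3 be an integer and assume condition (A-1) holds with index α = 2 and condition (A-3) holds. Then the radial profile of the Green function of the subordinate Brownian motion satisfies g(r) ≍ r^{−d+2} / φ'(r^{−2}) as r → 0+, and also g(r) ≍ r^{−d} / φ(r^{−2}) as r → 0+. -/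
open MeasureTheory Set Filter Topology
open Asymptotics

/-!
The function `φ` enters only through its tangent inequality `φ m ≤ φ l + φ' l * (m - l)`. Together
with the scaling of `φ'` it gives `φ l ≍ l * φ' l` by propagating the bound along `l, 2l, 4l, …`,
whence `φ (2 * l) ≥ (1 + ε) * φ l` and `φ (K * l) / φ l` is as large as we like for suitable `K`.

The decreasing function `u` with Laplace transform `1 / φ` is then comparable with
`1 / (t * φ (1 / t))` near `0`. The upper bound is Chebyshev's. For the lower one, take
`l = 1 / (K * t)` and split the integral defining `1 / φ l` at time `t`: the part before `t` is at
most `exp 1 / φ (1 / t)`, which the growth of `φ` makes a fraction of the total, so the part after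
`t`, at most `u t / l`, carries the rest.

Finally, by Brownian scaling `g r` is `r ^ (2 - d)` times the integral of `s ↦ u (r ^ 2 * s)`
against the heat kernel at unit distance, which is integrable against `1 + 1 / s` as `d > 2`.
-/

theorem setIntegral_pos_of_forall_pos {α : Type*} [MeasurableSpace α] {ν : Measure α} {s : Set α}
    {f : α → ℝ} (hs : MeasurableSet s) (hνs : ν s ≠ 0) (hf : IntegrableOn f s ν)
    (hpos : ∀ x ∈ s, 0 < f x) : 0 < ∫ x in s, f x ∂ν := by
  have hsupp : Function.support f ∩ s = s := inter_eq_right.2 fun x hx => (hpos x hx).ne'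
  rw [setIntegral_pos_iff_support_of_nonneg_ae
    (ae_restrict_of_forall_mem hs fun x hx => (hpos x hx).le) hf, hsupp]
  exact pos_iff_ne_zero.2 hνs

theorem forall_ge_of_doubling {P : ℝ → Prop} {a : ℝ} (ha : 0 < a)
    (base : ∀ x ∈ Icc a (2 * a), P x) (double : ∀ x, a ≤ x → P x → P (2 * x)) :
    ∀ x, a ≤ x → P x := by
  have dyadic (n : ℕ) : ∀ x, a ≤ x → x ≤ 2 ^ n * (2 * a) → P x := by
    induction n with
    | zero => exact fun x hx hx' => base x ⟨hx, by simpa using hx'⟩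
    | succ n ih =>
      intro x hx hx'
      rcases le_total x (2 * a) with h | h
      · exact base x ⟨hx, h⟩
      · rw [pow_succ] at hx'
        have half := double (x / 2) (by linarith) (ih _ (by linarith) (by linarith))
        rwa [mul_div_cancel₀ x two_ne_zero] at half
  intro x hx
  obtain ⟨n, hn⟩ := pow_unbounded_of_one_lt (x / (2 * a)) one_lt_two
  exact dyadic n x hx ((div_lt_iff₀ (by positivity)).1 hn).le

theorem eventually_pow_mul_le_comp_pow_mul {f : ℝ → ℝ} {b θ : ℝ} (hb : 0 < b) (hθ : 0 ≤ θ)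
    (h : ∀ᶠ x in atTop, θ * f x ≤ f (b * x)) (n : ℕ) :
    ∀ᶠ x in atTop, θ ^ n * f x ≤ f (b ^ n * x) := by
  induction n with
  | zero => simp
  | succ n ih =>
    have shifted := (tendsto_id.const_mul_atTop (pow_pos hb n)).eventually h
    filter_upwards [ih, shifted] with x hx hx'
    calc θ ^ (n + 1) * f x = θ * (θ ^ n * f x) := by ring
      _ ≤ θ * f (b ^ n * x) := by gcongr
      _ ≤ f (b * (b ^ n * x)) := hx'
      _ = f (b ^ (n + 1) * x) := by ring_nf

theorem exists_bounds_of_isTheta {f h : ℝ → ℝ} (hf : ∀ r, 0 < r → 0 ≤ f r)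
    (hh : ∀ r, 0 < r → 0 ≤ h r) (hfh : f =Θ[𝓝[>] 0] h) :
    ∃ c C r₀ : ℝ, 0 < c ∧ c ≤ C ∧ 0 < r₀ ∧ ∀ r, 0 < r → r < r₀ →
      c * h r ≤ f r ∧ f r ≤ C * h r := by
  obtain ⟨C, hC, hupper⟩ := hfh.isBigO.exists_pos
  obtain ⟨c, hc, hlower⟩ := hfh.isBigO_symm.exists_pos
  obtain ⟨r₀, hr₀, hbound⟩ := mem_nhdsGT_iff_exists_Ioo_subset.1 (hupper.bound.and hlower.bound)
  refine ⟨min c⁻¹ C, C, r₀, lt_min (inv_pos.2 hc) hC, min_le_right _ _, hr₀, fun r hr hr' => ?_⟩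
  obtain ⟨hfr, hhr⟩ := hbound ⟨hr, hr'⟩
  rw [Real.norm_of_nonneg (hf r hr), Real.norm_of_nonneg (hh r hr)] at hfr hhr
  refine ⟨?_, hfr⟩
  calc min c⁻¹ C * h r ≤ c⁻¹ * h r := mul_le_mul_of_nonneg_right (min_le_left _ _) (hh r hr)
    _ ≤ f r := (inv_mul_le_iff₀ hc).2 hhr

/-- `f'` selects a supergradient of `f` at each point of `s`: the graph of `f` over `s` lies below
every line of slope `f' x` through `(x, f x)`. This encodes "`f` is concave with derivative `f'`"
without asking for differentiability. -/
def IsSupergradientOn (f f' : ℝ → ℝ) (s : Set ℝ) : Prop :=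
  ∀ x ∈ s, ∀ y ∈ s, f y ≤ f x + f' x * (y - x)

namespace IsSupergradientOn

variable {f f' : ℝ → ℝ}

theorem congr {s : Set ℝ} {g g' : ℝ → ℝ} (h : IsSupergradientOn f f' s) (hf : EqOn g f s)
    (hf' : EqOn g' f' s) : IsSupergradientOn g g' s := fun x hx y hy => by
  rw [hf hx, hf hy, hf' hx]
  exact h x hx y hy

theorem monotoneOn {s : Set ℝ} (h : IsSupergradientOn f f' s) (hf' : ∀ x ∈ s, 0 ≤ f' x) :
    MonotoneOn f s := fun x hx y hy hxy => by
  have := h y hy x hx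
  nlinarith [hf' y hy]

theorem antitoneOn {s : Set ℝ} (h : IsSupergradientOn f f' s) : AntitoneOn f' s := by
  intro x hx y hy hxy
  rcases hxy.eq_or_lt with rfl | hlt
  · exact le_rfl
  · have hy_le := h x hx y hy
    have hx_le := h y hy x hx
    nlinarith

theorem mul_le (h : IsSupergradientOn f f' (Ioi 0)) (hf : ∀ x, 0 < x → 0 ≤ f x) {x : ℝ}
    (hx : 0 < x) : x * f' x ≤ f x := by
  have hlim : Tendsto (fun y => f x + f' x * (y - x)) (𝓝[>] 0) (𝓝 (f x + f' x * (0 - x))) :=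
    (Continuous.tendsto (by fun_prop) 0).mono_left nhdsWithin_le_nhds
  have hnonneg : 0 ≤ f x + f' x * (0 - x) := ge_of_tendsto hlim <| by
    filter_upwards [self_mem_nhdsWithin] with y hy
    exact (hf y hy).trans (h x hx y hy)
  linarith

/-- The bound doubles: if `f x ≤ C x f' x`, then
`f (2x) ≤ f x + x f' x ≤ (C + 1) q x f' (2x)`, and `(C + 1) q ≤ 2C` for large `C` since `q < 2`. -/
theorem isBigO_mul (h : IsSupergradientOn f f' (Ioi 0)) (hf : ∀ x, 0 < x → 0 ≤ f x)
    (hf' : ∀ x, 0 < x → 0 < f' x) {q : ℝ} (hq : q < 2)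
    (hscale : ∀ᶠ x in atTop, f' x ≤ q * f' (2 * x)) : f =O[atTop] fun x => x * f' x := by
  obtain ⟨a, hge⟩ := (hscale.and (eventually_gt_atTop 0)).exists_forall_of_atTop
  have ha : 0 < a := (hge a le_rfl).2
  have hfa : 0 < f' (2 * a) := hf' _ (by positivity)
  have hmono := h.monotoneOn fun x hx => (hf' x hx).le
  set C := max (q / (2 - q)) (f (2 * a) / (a * f' (2 * a)))
  have hC0 : 0 ≤ C := (div_nonneg (hf _ (by positivity)) (by positivity)).trans (le_max_right _ _)
  have hCq : (C + 1) * q ≤ 2 * C := by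
    have := (div_le_iff₀ (by linarith)).1 (le_max_left _ _ : q / (2 - q) ≤ C)
    linarith
  have base : ∀ x ∈ Icc a (2 * a), f x ≤ C * (x * f' x) := fun x ⟨hax, hxa⟩ => by
    have hx : 0 < x := ha.trans_le hax
    calc f x ≤ f (2 * a) := hmono hx (hx.trans_le hxa) hxa
      _ ≤ C * (a * f' (2 * a)) := (div_le_iff₀ (by positivity)).1 (le_max_right _ _)
      _ ≤ C * (x * f' x) := by gcongr; exact h.antitoneOn hx (hx.trans_le hxa) hxa
  have double : ∀ x, a ≤ x → f x ≤ C * (x * f' x) → f (2 * x) ≤ C * (2 * x * f' (2 * x)) := by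
    intro x hax hCx
    have hx : 0 < x := ha.trans_le hax
    have h2x : 0 < 2 * x := by positivity
    have hf2x := hf' _ h2x
    calc f (2 * x) ≤ f x + f' x * (2 * x - x) := h x hx _ h2x
      _ ≤ (C + 1) * x * f' x := by linarith
      _ ≤ (C + 1) * x * (q * f' (2 * x)) := by gcongr; exact (hge x hax).1
      _ = (C + 1) * q * (x * f' (2 * x)) := by ring
      _ ≤ 2 * C * (x * f' (2 * x)) := by gcongr
      _ = C * (2 * x * f' (2 * x)) := by ring
  refine IsBigO.of_bound C ?_
  filter_upwards [eventually_ge_atTop a] with x hax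
  have hx : 0 < x := ha.trans_le hax
  rw [Real.norm_of_nonneg (hf x hx), Real.norm_of_nonneg (mul_pos hx (hf' x hx)).le]
  exact forall_ge_of_doubling ha base double x hax

theorem isTheta_mul (h : IsSupergradientOn f f' (Ioi 0)) (hf : ∀ x, 0 < x → 0 ≤ f x)
    (hf' : ∀ x, 0 < x → 0 < f' x) {q : ℝ} (hq : q < 2)
    (hscale : ∀ᶠ x in atTop, f' x ≤ q * f' (2 * x)) : f =Θ[atTop] fun x => x * f' x := by
  refine ⟨h.isBigO_mul hf hf' hq hscale, IsBigO.of_bound 1 ?_⟩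
  filter_upwards [eventually_gt_atTop 0] with x hx
  rw [Real.norm_of_nonneg (hf x hx), Real.norm_of_nonneg (mul_pos hx (hf' x hx)).le, one_mul]
  exact h.mul_le hf hx

theorem exists_mul_le_comp_mul (h : IsSupergradientOn f f' (Ioi 0)) (hf : ∀ x, 0 < x → 0 ≤ f x)
    (hf' : ∀ x, 0 < x → 0 < f' x) (hO : f =O[atTop] fun x => x * f' x) (M : ℝ) :
    ∃ K > 0, ∀ᶠ x in atTop, M * f x ≤ f (K * x) := by
  obtain ⟨C, hC, hbound⟩ := hO.exists_pos
  have hdouble : ∀ᶠ x in atTop, (1 + (2 * C)⁻¹) * f x ≤ f (2 * x) := by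
    have hbound2 := (tendsto_id.const_mul_atTop two_pos).eventually hbound.bound
    filter_upwards [hbound2, eventually_gt_atTop 0] with x hx hx0
    have h2x : 0 < 2 * x := by positivity
    have htangent := h (2 * x) h2x x hx0
    have hmono := h.monotoneOn (fun y hy => (hf' y hy).le) hx0 h2x (by linarith)
    have hx' : (2 * C)⁻¹ * f (2 * x) ≤ x * f' (2 * x) := by
      have := hf' _ h2x
      rw [inv_mul_le_iff₀ (by positivity)]
      rw [id, Real.norm_of_nonneg (hf _ h2x), Real.norm_of_nonneg (by positivity)] at hx
      linarith
    have : (2 * C)⁻¹ * f x ≤ (2 * C)⁻¹ * f (2 * x) := by gcongr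
    linarith
  have hratio : 0 < (2 * C)⁻¹ := by positivity
  obtain ⟨n, hn⟩ := pow_unbounded_of_one_lt M (lt_add_of_pos_right 1 hratio)
  refine ⟨2 ^ n, by positivity, ?_⟩
  filter_upwards [eventually_pow_mul_le_comp_pow_mul two_pos (by positivity) hdouble n,
    eventually_gt_atTop 0] with x hx hx0
  exact (mul_le_mul_of_nonneg_right hn.le (hf x hx0)).trans hx

end IsSupergradientOn

/-- Slow variation at infinity, that is, regular variation of index `0`. -/
def IsSlowlyVarying (f : ℝ → ℝ) : Prop :=
  ∀ x, 0 < x → Tendsto (fun l => f (l * x) / f l) atTop (𝓝 1)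

theorem IsSlowlyVarying.eventually_le_mul {f : ℝ → ℝ} (hf : IsSlowlyVarying f)
    (hpos : ∀ x, 0 < x → 0 < f x) {q b : ℝ} (hq : 1 < q) (hb : 0 < b) :
    ∀ᶠ x in atTop, f x ≤ q * f (b * x) := by
  filter_upwards [(hf b hb).eventually (lt_mem_nhds (inv_lt_one_of_one_lt₀ hq)),
    eventually_gt_atTop 0] with x hx hx0
  rw [lt_div_iff₀ (hpos x hx0), inv_mul_lt_iff₀ (by linarith), mul_comm x] at hx
  exact hx.le

theorem integrableOn_mul_of_abs_le_mul_min {μ w : ℝ → ℝ} {C : ℝ}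
    (hμ : IntegrableOn (fun t => min 1 t * μ t) (Ioi 0)) (hw : Measurable w)
    (hwC : ∀ t, 0 < t → |w t| ≤ C * min 1 t) : IntegrableOn (fun t => w t * μ t) (Ioi 0) := by
  have hquot : ∀ᵐ t ∂volume.restrict (Ioi (0 : ℝ)), ‖w t / min 1 t‖ ≤ C :=
    ae_restrict_of_forall_mem measurableSet_Ioi fun t (ht : 0 < t) => by
      have hmin : 0 < min 1 t := lt_min one_pos ht
      rw [norm_div, Real.norm_of_nonneg hmin.le, div_le_iff₀ hmin]
      exact hwC t ht
  have hmeas : Measurable fun t => w t / min 1 t := hw.div (measurable_const.min measurable_id)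
  refine IntegrableOn.congr_fun (hμ.bdd_mul hmeas.aestronglyMeasurable hquot) (fun t ht => ?_)
    measurableSet_Ioi
  have hmin : min 1 t ≠ 0 := (lt_min one_pos ht).ne'
  field_simp

/-- The driftless Bernstein function (Laplace exponent) of the Lévy measure with density `μ`. -/
noncomputable def laplaceExponent (μ : ℝ → ℝ) (l : ℝ) : ℝ :=
  ∫ t in Ioi (0 : ℝ), (1 - Real.exp (-(l * t))) * μ t

/-- The derivative of `laplaceExponent μ`, given by differentiation under the integral sign. -/
noncomputable def laplaceExponentDeriv (μ : ℝ → ℝ) (l : ℝ) : ℝ :=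
  ∫ t in Ioi (0 : ℝ), t * Real.exp (-(l * t)) * μ t

theorem integrableOn_laplaceExponent {μ : ℝ → ℝ}
    (hμ : IntegrableOn (fun t => min 1 t * μ t) (Ioi 0)) {l : ℝ} (hl : 0 < l) :
    IntegrableOn (fun t => (1 - Real.exp (-(l * t))) * μ t) (Ioi 0) := by
  refine integrableOn_mul_of_abs_le_mul_min (C := max 1 l) hμ (by fun_prop) fun t ht => ?_
  have hexp : Real.exp (-(l * t)) ≤ 1 := Real.exp_le_one_iff.2 (by nlinarith)
  rw [abs_of_nonneg (by linarith), mul_min_of_nonneg _ _ (by positivity)]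
  refine le_min ?_ ?_
  · linarith [le_max_left 1 l, Real.exp_pos (-(l * t))]
  · calc 1 - Real.exp (-(l * t)) ≤ l * t := by linarith [Real.one_sub_le_exp_neg (l * t)]
      _ ≤ max 1 l * t := by gcongr; exact le_max_right _ _

theorem integrableOn_laplaceExponentDeriv {μ : ℝ → ℝ}
    (hμ : IntegrableOn (fun t => min 1 t * μ t) (Ioi 0)) {l : ℝ} (hl : 0 < l) :
    IntegrableOn (fun t => t * Real.exp (-(l * t)) * μ t) (Ioi 0) := by
  refine integrableOn_mul_of_abs_le_mul_min (C := max 1 l⁻¹) hμ (by fun_prop) fun t ht => ?_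
  rw [abs_of_nonneg (by positivity), mul_min_of_nonneg _ _ (by positivity)]
  refine le_min ?_ ?_
  · have : t * Real.exp (-(l * t)) ≤ l⁻¹ := by
      rw [Real.exp_neg, ← div_eq_mul_inv, div_le_iff₀ (Real.exp_pos _), le_inv_mul_iff₀ hl]
      linarith [Real.add_one_le_exp (l * t)]
    linarith [le_max_right 1 l⁻¹]
  · calc t * Real.exp (-(l * t)) ≤ t * 1 := by gcongr; exact Real.exp_le_one_iff.2 (by nlinarith)
      _ = 1 * t := mul_comm _ _
      _ ≤ max 1 l⁻¹ * t := by gcongr; exact le_max_left _ _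

theorem laplaceExponentDeriv_pos {μ : ℝ → ℝ} (hμpos : ∀ t, 0 < t → 0 < μ t)
    (hμ : IntegrableOn (fun t => min 1 t * μ t) (Ioi 0)) {l : ℝ} (hl : 0 < l) :
    0 < laplaceExponentDeriv μ l :=
  setIntegral_pos_of_forall_pos measurableSet_Ioi (by simp)
    (integrableOn_laplaceExponentDeriv hμ hl) fun t ht =>
      mul_pos (mul_pos ht (Real.exp_pos _)) (hμpos t ht)

theorem laplaceExponent_nonneg {μ : ℝ → ℝ} (hμ0 : ∀ t, 0 < t → 0 ≤ μ t) {l : ℝ} (hl : 0 ≤ l) :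
    0 ≤ laplaceExponent μ l :=
  setIntegral_nonneg measurableSet_Ioi fun t (ht : 0 < t) => mul_nonneg
    (sub_nonneg.2 (Real.exp_le_one_iff.2 (neg_nonpos.2 (mul_nonneg hl ht.le)))) (hμ0 t ht)

theorem isSupergradientOn_laplaceExponent {μ : ℝ → ℝ} (hμ0 : ∀ t, 0 < t → 0 ≤ μ t)
    (hμ : IntegrableOn (fun t => min 1 t * μ t) (Ioi 0)) :
    IsSupergradientOn (laplaceExponent μ) (laplaceExponentDeriv μ) (Ioi 0) := by
  intro l hl m hm
  have hderiv := (integrableOn_laplaceExponentDeriv hμ hl).mul_const (m - l)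
  rw [laplaceExponent, laplaceExponent, laplaceExponentDeriv, ← integral_mul_const,
    ← integral_add (integrableOn_laplaceExponent hμ hl) hderiv]
  refine setIntegral_mono_on (integrableOn_laplaceExponent hμ hm)
    ((integrableOn_laplaceExponent hμ hl).add hderiv) measurableSet_Ioi fun t ht => ?_
  have htangent : Real.exp (-(l * t)) * (1 - (m - l) * t) ≤ Real.exp (-(m * t)) := by
    calc _ ≤ Real.exp (-(l * t)) * Real.exp (-((m - l) * t)) := by
          gcongr; exact Real.one_sub_le_exp_neg _
      _ = Real.exp (-(m * t)) := by rw [← Real.exp_add]; ring_nf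
  nlinarith [hμ0 t ht]

/-- The Laplace transform of `u`, with the junk value `0` where the integral diverges. -/
noncomputable def laplaceTransform (u : ℝ → ℝ) (l : ℝ) : ℝ :=
  ∫ t in Ioi (0 : ℝ), Real.exp (-(l * t)) * u t

theorem laplaceTransform_nonneg {u : ℝ → ℝ} (hu0 : ∀ t, 0 < t → 0 ≤ u t) (l : ℝ) :
    0 ≤ laplaceTransform u l :=
  setIntegral_nonneg measurableSet_Ioi fun t ht => mul_nonneg (Real.exp_pos _).le (hu0 t ht)

section Laplace

variable {u : ℝ → ℝ} (hu0 : ∀ t, 0 < t → 0 ≤ u t) (hu : AntitoneOn u (Ioi 0))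
include hu0 hu

theorem mul_exp_neg_mul_mul_le_laplaceTransform {l t : ℝ} (hl : 0 ≤ l)
    (hint : IntegrableOn (fun t => Real.exp (-(l * t)) * u t) (Ioi 0)) (ht : 0 < t) :
    t * (Real.exp (-(l * t)) * u t) ≤ laplaceTransform u l := by
  have hlower : ∀ s ∈ Ioc 0 t, Real.exp (-(l * t)) * u t ≤ Real.exp (-(l * s)) * u s :=
    fun s ⟨hs, hst⟩ => by
      have := hu0 t ht
      gcongr
      exact hu hs ht hst
  calc t * (Real.exp (-(l * t)) * u t)
      = volume.real (Ioc 0 t) • (Real.exp (-(l * t)) * u t) := by simp [ht.le]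
    _ ≤ ∫ s in Ioc 0 t, Real.exp (-(l * s)) * u s :=
        setIntegral_ge_of_const_le measurableSet_Ioc (by simp) hlower
          (hint.mono_set Ioc_subset_Ioi_self)
    _ ≤ laplaceTransform u l := setIntegral_mono_set hint
        (ae_restrict_of_forall_mem measurableSet_Ioi fun s hs =>
          mul_nonneg (Real.exp_pos _).le (hu0 s hs)) Ioc_subset_Ioi_self.eventuallyLE

theorem apply_mul_le_laplaceTransform_inv {R s : ℝ} (hR : 0 < R)
    (hint : IntegrableOn (fun t => Real.exp (-(R⁻¹ * t)) * u t) (Ioi 0)) (hs : 0 < s) :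
    u (R * s) ≤ Real.exp 1 * laplaceTransform u R⁻¹ / R * (1 + s⁻¹) := by
  set L := laplaceTransform u R⁻¹
  have hL : 0 ≤ L := laplaceTransform_nonneg hu0 _
  set m := min 1 s with hm
  have hm0 : 0 < m := lt_min one_pos hs
  have hmR : 0 < R * m := mul_pos hR hm0
  have hinv : m⁻¹ ≤ 1 + s⁻¹ := by
    have := inv_pos.2 hs
    rcases min_choice 1 s with h | h <;> rw [hm, h] <;> linarith
  have hcheb : R * m * u (R * m) ≤ Real.exp 1 * L := by
    have := mul_exp_neg_mul_mul_le_laplaceTransform hu0 hu (inv_nonneg.2 hR.le) hint hmR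
    rw [inv_mul_cancel_left₀ hR.ne', Real.exp_neg, mul_left_comm,
      inv_mul_le_iff₀ (Real.exp_pos _)] at this
    exact this.trans (by gcongr; exact min_le_left 1 s)
  calc u (R * s) ≤ u (R * m) := hu hmR (mul_pos hR hs) (by gcongr; exact min_le_right _ _)
    _ ≤ Real.exp 1 * L / (R * m) := (le_div_iff₀' hmR).2 hcheb
    _ = Real.exp 1 * L / R * m⁻¹ := by rw [div_mul_eq_div_div, div_eq_mul_inv _ m]
    _ ≤ Real.exp 1 * L / R * (1 + s⁻¹) := by gcongr

theorem laplaceTransform_le_add {l R : ℝ} (hl : 0 < l) (hR : 0 < R)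
    (hintl : IntegrableOn (fun t => Real.exp (-(l * t)) * u t) (Ioi 0))
    (hintR : IntegrableOn (fun t => Real.exp (-(R⁻¹ * t)) * u t) (Ioi 0)) :
    laplaceTransform u l ≤ Real.exp 1 * laplaceTransform u R⁻¹ + u R / l := by
  have hexpint : IntegrableOn (fun t => u R * Real.exp (-l * t)) (Ioi 0) :=
    (integrableOn_exp_mul_Ioi (neg_lt_zero.2 hl) 0).const_mul _
  have hexpval : u R / l = ∫ t in Ioi 0, u R * Real.exp (-l * t) := by
    rw [integral_const_mul, integral_exp_mul_Ioi (neg_lt_zero.2 hl)]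
    simp [div_eq_mul_inv]
  rw [hexpval, laplaceTransform, laplaceTransform, ← integral_const_mul,
    ← integral_add (hintR.const_mul _) hexpint]
  refine setIntegral_mono_on hintl ((hintR.const_mul _).add hexpint) measurableSet_Ioi
    fun t (ht : 0 < t) => ?_
  have hut := hu0 t ht
  have huR := hu0 R hR
  rw [neg_mul, ← mul_assoc, ← Real.exp_add]
  rcases le_total t R with htR | hRt
  · have hexp : Real.exp (-(l * t)) ≤ Real.exp (1 + -(R⁻¹ * t)) := by
      gcongr
      have : R⁻¹ * t ≤ 1 := (inv_mul_le_one₀ hR).2 htR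
      nlinarith
    calc Real.exp (-(l * t)) * u t ≤ Real.exp (1 + -(R⁻¹ * t)) * u t := by gcongr
      _ ≤ _ := le_add_of_nonneg_right (by positivity)
  · calc Real.exp (-(l * t)) * u t ≤ Real.exp (-(l * t)) * u R := by gcongr; exact hu hR ht hRt
      _ = u R * Real.exp (-(l * t)) := mul_comm _ _
      _ ≤ _ := le_add_of_nonneg_left (by positivity)

end Laplace

/-- The heat kernel in dimension `d` at distance `1` from the pole, as a function of time. -/
noncomputable def unitHeatKernel (d s : ℝ) : ℝ :=
  (4 * Real.pi * s) ^ (-d / 2) * Real.exp (-(1 / (4 * s)))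

section HeatKernel

theorem unitHeatKernel_pos {d s : ℝ} (hs : 0 < s) : 0 < unitHeatKernel d s := by
  unfold unitHeatKernel
  positivity

/-- The substitution `t ↦ t⁻¹` reduces this to the integrability of `t ^ (q - 2) * exp (-b * t)`. -/
theorem integrableOn_rpow_neg_mul_exp_neg_div {q b : ℝ} (hq : 1 < q) (hb : 0 < b) :
    IntegrableOn (fun t => t ^ (-q) * Real.exp (-(b / t))) (Ioi 0) := by
  have hgamma : IntegrableOn (fun t => t ^ (q - 2) * Real.exp (-b * t ^ (1 : ℝ))) (Ioi 0) :=
    integrableOn_rpow_mul_exp_neg_mul_rpow (by linarith) one_pos hb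
  refine ((integrableOn_Ioi_comp_rpow_iff' _ (neg_ne_zero.2 one_ne_zero)).2 hgamma).congr_fun
    (fun t (ht : 0 < t) => ?_) measurableSet_Ioi
  simp only [smul_eq_mul, ← Real.rpow_mul ht.le, ← mul_assoc, ← Real.rpow_add ht]
  rw [mul_one, Real.rpow_neg_one, neg_mul, div_eq_mul_inv]
  ring_nf

theorem unitHeatKernel_eq {d s : ℝ} (hs : 0 ≤ s) :
    unitHeatKernel d s = (4 * Real.pi) ^ (-d / 2) * (s ^ (-(d / 2)) * Real.exp (-(1 / 4 / s))) := by
  rw [unitHeatKernel, Real.mul_rpow (by positivity) hs, mul_assoc, neg_div, div_div]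

theorem integrableOn_unitHeatKernel_mul_one_add_inv {d : ℝ} (hd : 2 < d) :
    IntegrableOn (fun s => unitHeatKernel d s * (1 + s⁻¹)) (Ioi 0) := by
  have hint (q : ℝ) (hq : 1 < q) :=
    integrableOn_rpow_neg_mul_exp_neg_div hq (b := 1 / 4) (by norm_num)
  refine IntegrableOn.congr_fun (((hint (d / 2) (by linarith)).add
    (hint (d / 2 + 1) (by linarith))).const_mul ((4 * Real.pi) ^ (-d / 2)))
    (fun s (hs : 0 < s) => ?_) measurableSet_Ioi
  simp only [Pi.add_apply, unitHeatKernel_eq hs.le, neg_add, Real.rpow_add hs, Real.rpow_neg_one]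
  ring

variable {d A : ℝ} {v : ℝ → ℝ}

theorem integrableOn_unitHeatKernel_mul (hd : 2 < d) (hv0 : ∀ s, 0 < s → 0 ≤ v s)
    (hv : AntitoneOn v (Ioi 0)) (hvA : ∀ s, 0 < s → v s ≤ A * (1 + s⁻¹)) :
    IntegrableOn (fun s => unitHeatKernel d s * v s) (Ioi 0) := by
  have hmeas : Measurable (unitHeatKernel d) := by unfold unitHeatKernel; fun_prop
  refine Integrable.mono' ((integrableOn_unitHeatKernel_mul_one_add_inv hd).const_mul A)
    (hmeas.aemeasurable.mul
      (aemeasurable_restrict_of_antitoneOn measurableSet_Ioi hv)).aestronglyMeasurable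
    (ae_restrict_of_forall_mem measurableSet_Ioi fun s hs => ?_)
  have hk := unitHeatKernel_pos (d := d) hs
  rw [Real.norm_of_nonneg (mul_nonneg hk.le (hv0 s hs)), mul_left_comm]
  exact mul_le_mul_of_nonneg_left (hvA s hs) hk.le

theorem integral_unitHeatKernel_mul_le (hd : 2 < d) (hv0 : ∀ s, 0 < s → 0 ≤ v s)
    (hv : AntitoneOn v (Ioi 0)) (hvA : ∀ s, 0 < s → v s ≤ A * (1 + s⁻¹)) :
    ∫ s in Ioi 0, unitHeatKernel d s * v s ≤
      A * ∫ s in Ioi 0, unitHeatKernel d s * (1 + s⁻¹) := by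
  rw [← integral_const_mul]
  refine setIntegral_mono_on (integrableOn_unitHeatKernel_mul hd hv0 hv hvA)
    ((integrableOn_unitHeatKernel_mul_one_add_inv hd).const_mul A) measurableSet_Ioi fun s hs => ?_
  rw [mul_left_comm]
  exact mul_le_mul_of_nonneg_left (hvA s hs) (unitHeatKernel_pos hs).le

theorem integrableOn_unitHeatKernel (hd : 2 < d) :
    IntegrableOn (unitHeatKernel d) (Ioi 0) := by
  simpa using integrableOn_unitHeatKernel_mul (v := 1) (A := 1) hd (by simp) antitoneOn_const
    fun s hs => by simpa using hs.le

theorem mul_le_integral_unitHeatKernel_mul (hd : 2 < d) (hv0 : ∀ s, 0 < s → 0 ≤ v s)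
    (hv : AntitoneOn v (Ioi 0)) (hint : IntegrableOn (fun s => unitHeatKernel d s * v s) (Ioi 0)) :
    (∫ s in Ioc 0 1, unitHeatKernel d s) * v 1 ≤ ∫ s in Ioi 0, unitHeatKernel d s * v s := by
  rw [← integral_mul_const]
  refine (setIntegral_mono_on
    (((integrableOn_unitHeatKernel hd).mono_set Ioc_subset_Ioi_self).mul_const _)
    (hint.mono_set Ioc_subset_Ioi_self) measurableSet_Ioc fun s ⟨hs, hs1⟩ => ?_).trans
    (setIntegral_mono_set hint (ae_restrict_of_forall_mem measurableSet_Ioi fun s hs =>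
      mul_nonneg (unitHeatKernel_pos hs).le (hv0 s hs)) Ioc_subset_Ioi_self.eventuallyLE)
  exact mul_le_mul_of_nonneg_left (hv hs (mem_Ioi.2 one_pos) hs1) (unitHeatKernel_pos hs).le

end HeatKernel

/-- The radial profile of the Green function in dimension `d` of the Brownian motion subordinated
by a subordinator with potential density `u`. The dimension may be any real number. -/
noncomputable def greenProfile (d : ℝ) (u : ℝ → ℝ) (r : ℝ) : ℝ :=
  ∫ t in Ioi (0 : ℝ), (4 * Real.pi * t) ^ (-d / 2) * Real.exp (-(r ^ 2 / (4 * t))) * u t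

theorem greenProfile_eq (d : ℝ) (u : ℝ → ℝ) {r : ℝ} (hr : 0 < r) :
    greenProfile d u r = r ^ (-d + 2) * ∫ s in Ioi 0, unitHeatKernel d s * u (r ^ 2 * s) := by
  have hr2 : 0 < r ^ 2 := by positivity
  have hsubst := integral_comp_mul_left_Ioi (fun t => (4 * Real.pi * t) ^ (-d / 2) *
    Real.exp (-(r ^ 2 / (4 * t))) * u t) 0 hr2
  rw [mul_zero, smul_eq_mul, eq_inv_mul_iff_mul_eq₀ hr2.ne'] at hsubst
  have hpow : (r ^ 2) ^ (-d / 2) = r ^ (-d) := by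
    rw [← Real.rpow_two, ← Real.rpow_mul hr.le]
    ring_nf
  rw [greenProfile, ← hsubst, Real.rpow_add hr, Real.rpow_two, mul_comm (r ^ (-d)), mul_assoc,
    ← integral_const_mul (r ^ (-d))]
  congr 1
  refine setIntegral_congr_fun measurableSet_Ioi fun s (hs : 0 < s) => ?_
  have hexponent : r ^ 2 / (4 * (r ^ 2 * s)) = 1 / (4 * s) := by field_simp
  simp only [unitHeatKernel, hexponent]
  rw [mul_left_comm (4 * Real.pi), Real.mul_rpow hr2.le (by positivity), hpow]
  ring

theorem greenProfile_nonneg {u : ℝ → ℝ} (hu0 : ∀ t, 0 < t → 0 ≤ u t) (d r : ℝ) :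
    0 ≤ greenProfile d u r :=
  setIntegral_nonneg measurableSet_Ioi fun t (ht : 0 < t) => by
    have := hu0 t ht
    positivity

theorem antitoneOn_comp_mul_left {u : ℝ → ℝ} (hu : AntitoneOn u (Ioi 0)) {a : ℝ} (ha : 0 < a) :
    AntitoneOn (fun s => u (a * s)) (Ioi 0) := fun _ hs _ ht hst =>
  hu (mul_pos ha hs) (mul_pos ha ht) (mul_le_mul_of_nonneg_left hst ha.le)

section Green

variable {d : ℝ} {u : ℝ → ℝ} (hu0 : ∀ t, 0 < t → 0 ≤ u t) (hu : AntitoneOn u (Ioi 0))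
  (hint : ∀ l, 0 < l → IntegrableOn (fun t => Real.exp (-(l * t)) * u t) (Ioi 0))
include hu0 hu hint

theorem greenProfile_le (hd : 2 < d) {r : ℝ} (hr : 0 < r) :
    greenProfile d u r ≤ (Real.exp 1 * ∫ s in Ioi 0, unitHeatKernel d s * (1 + s⁻¹)) *
      (r ^ (-d) * laplaceTransform u (r ^ 2)⁻¹) := by
  have hr2 : 0 < r ^ 2 := by positivity
  calc greenProfile d u r
      = r ^ (-d + 2) * ∫ s in Ioi 0, unitHeatKernel d s * u (r ^ 2 * s) := greenProfile_eq d u hr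
    _ ≤ r ^ (-d + 2) * (Real.exp 1 * laplaceTransform u (r ^ 2)⁻¹ / r ^ 2 *
          ∫ s in Ioi 0, unitHeatKernel d s * (1 + s⁻¹)) := by
        gcongr
        exact integral_unitHeatKernel_mul_le hd (fun s hs => hu0 _ (by positivity))
          (antitoneOn_comp_mul_left hu hr2) fun s hs =>
            apply_mul_le_laplaceTransform_inv hu0 hu hr2 (hint _ (inv_pos.2 hr2)) hs
    _ = _ := by rw [Real.rpow_add hr, Real.rpow_two]; field_simp

theorem le_greenProfile (hd : 2 < d) {r : ℝ} (hr : 0 < r) :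
    (∫ s in Ioc 0 1, unitHeatKernel d s) * (r ^ (-d + 2) * u (r ^ 2)) ≤ greenProfile d u r := by
  have hr2 : 0 < r ^ 2 := by positivity
  have hv0 : ∀ s, 0 < s → 0 ≤ u (r ^ 2 * s) := fun s hs => hu0 _ (by positivity)
  have hv := antitoneOn_comp_mul_left hu hr2
  have hkernel := integrableOn_unitHeatKernel_mul hd hv0 hv fun s hs =>
    apply_mul_le_laplaceTransform_inv hu0 hu hr2 (hint _ (inv_pos.2 hr2)) hs
  rw [greenProfile_eq d u hr, mul_left_comm]
  gcongr
  simpa using mul_le_integral_unitHeatKernel_mul hd hv0 hv hkernel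

theorem laplaceTransform_inv_le_mul {K R : ℝ} (hK : 0 < K) (hR : 0 < R)
    (hdecay : (Real.exp 1 + 1) * laplaceTransform u R⁻¹ ≤ laplaceTransform u (K⁻¹ * R⁻¹)) :
    laplaceTransform u R⁻¹ ≤ K * R * u R := by
  have hl : 0 < K⁻¹ * R⁻¹ := by positivity
  have hsplit := laplaceTransform_le_add hu0 hu hl hR (hint _ hl) (hint _ (inv_pos.2 hR))
  calc laplaceTransform u R⁻¹ ≤ u R / (K⁻¹ * R⁻¹) := by linarith
    _ = K * R * u R := by field_simp

theorem isTheta_greenProfile (hd : 2 < d) {K : ℝ} (hK : 0 < K) (hdecay : ∀ᶠ l in atTop,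
      (Real.exp 1 + 1) * laplaceTransform u (K * l) ≤ laplaceTransform u l) :
    greenProfile d u =Θ[𝓝[>] 0] fun r => r ^ (-d) * laplaceTransform u (r ^ 2)⁻¹ := by
  set k := ∫ s in Ioc 0 1, unitHeatKernel d s
  have hk : 0 < k := setIntegral_pos_of_forall_pos measurableSet_Ioc (by simp)
    ((integrableOn_unitHeatKernel hd).mono_set Ioc_subset_Ioi_self)
    fun s hs => unitHeatKernel_pos hs.1
  have hnorm {r : ℝ} (hr : 0 < r) : ‖r ^ (-d) * laplaceTransform u (r ^ 2)⁻¹‖ =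
      r ^ (-d) * laplaceTransform u (r ^ 2)⁻¹ :=
    Real.norm_of_nonneg (mul_nonneg (by positivity) (laplaceTransform_nonneg hu0 _))
  constructor
  · refine IsBigO.of_bound (Real.exp 1 * ∫ s in Ioi 0, unitHeatKernel d s * (1 + s⁻¹)) ?_
    filter_upwards [self_mem_nhdsWithin] with r hr
    rw [hnorm hr, Real.norm_of_nonneg (greenProfile_nonneg hu0 d r)]
    exact greenProfile_le hu0 hu hint hd hr
  · refine IsBigO.of_bound (K * k⁻¹) ?_
    have hlarge : Tendsto (fun r : ℝ => K⁻¹ * (r⁻¹) ^ 2) (𝓝[>] 0) atTop :=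
      ((tendsto_pow_atTop two_ne_zero).comp tendsto_inv_nhdsGT_zero).const_mul_atTop (inv_pos.2 hK)
    filter_upwards [hlarge.eventually hdecay, self_mem_nhdsWithin] with r hdecay (hr : 0 < r)
    rw [mul_inv_cancel_left₀ hK.ne', inv_pow] at hdecay
    rw [hnorm hr, Real.norm_of_nonneg (greenProfile_nonneg hu0 d r)]
    calc r ^ (-d) * laplaceTransform u (r ^ 2)⁻¹ ≤ r ^ (-d) * (K * r ^ 2 * u (r ^ 2)) := by
          gcongr
          exact laplaceTransform_inv_le_mul hu0 hu hint hK (by positivity) hdecay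
      _ = K * k⁻¹ * (k * (r ^ (-d + 2) * u (r ^ 2))) := by
          rw [Real.rpow_add hr, Real.rpow_two]; field_simp
      _ ≤ K * k⁻¹ * greenProfile d u r := by gcongr; exact le_greenProfile hu0 hu hint hd hr

end Green

theorem isTheta_greenProfile_of_isSupergradientOn {d q : ℝ} {φ φ' u : ℝ → ℝ} (hd : 2 < d)
    (hφ : IsSupergradientOn φ φ' (Ioi 0)) (hφ0 : ∀ l, 0 < l → 0 ≤ φ l)
    (hφ'pos : ∀ l, 0 < l → 0 < φ' l) (hq : q < 2)
    (hscale : ∀ᶠ l in atTop, φ' l ≤ q * φ' (2 * l))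
    (hu0 : ∀ t, 0 < t → 0 ≤ u t) (hudec : AntitoneOn u (Ioi 0))
    (hu : ∀ l, 0 < l → laplaceTransform u l = 1 / φ l) :
    greenProfile d u =Θ[𝓝[>] 0] fun r => r ^ (-d) / φ (r ^ (-2 : ℝ)) := by
  have hφpos : ∀ l, 0 < l → 0 < φ l := fun l hl =>
    (mul_pos hl (hφ'pos l hl)).trans_le (hφ.mul_le hφ0 hl)
  have hint : ∀ l, 0 < l → IntegrableOn (fun t => Real.exp (-(l * t)) * u t) (Ioi 0) := fun l hl =>
    .of_integral_ne_zero ((hu l hl).trans_ne (one_div_pos.2 (hφpos l hl)).ne')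
  obtain ⟨K, hK, hgrowth⟩ := hφ.exists_mul_le_comp_mul hφ0 hφ'pos
    (hφ.isBigO_mul hφ0 hφ'pos hq hscale) (Real.exp 1 + 1)
  have hdecay : ∀ᶠ l in atTop,
      (Real.exp 1 + 1) * laplaceTransform u (K * l) ≤ laplaceTransform u l := by
    filter_upwards [hgrowth, eventually_gt_atTop 0] with l hl hl0
    have hKl : 0 < K * l := mul_pos hK hl0
    rwa [hu _ hKl, hu _ hl0, mul_one_div, div_le_div_iff₀ (hφpos _ hKl) (hφpos _ hl0), one_mul]
  refine (isTheta_greenProfile hu0 hudec hint hd hK hdecay).trans_eventuallyEq ?_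
  filter_upwards [self_mem_nhdsWithin] with r (hr : 0 < r)
  rw [hu _ (by positivity), mul_one_div, Real.rpow_neg hr.le 2, Real.rpow_two]

theorem isTheta_rpow_neg_div {d : ℝ} {φ φ' : ℝ → ℝ} (hφ : φ =Θ[atTop] fun l => l * φ' l) :
    (fun r => r ^ (-d) / φ (r ^ (-2 : ℝ))) =Θ[𝓝[>] 0]
      fun r => r ^ (-d + 2) / φ' (r ^ (-2 : ℝ)) := by
  have hlim : Tendsto (fun r : ℝ => r ^ (-2 : ℝ)) (𝓝[>] 0) atTop :=
    tendsto_rpow_neg_nhdsGT_zero (by norm_num)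
  have hcomp : (fun r : ℝ => φ (r ^ (-2 : ℝ))) =Θ[𝓝[>] 0]
      fun r => r ^ (-2 : ℝ) * φ' (r ^ (-2 : ℝ)) :=
    ⟨hφ.isBigO.comp_tendsto hlim, hφ.isBigO_symm.comp_tendsto hlim⟩
  refine ((isTheta_refl _ _).div hcomp).trans_eventuallyEq ?_
  filter_upwards [self_mem_nhdsWithin] with r (hr : 0 < r)
  rw [div_mul_eq_div_div, ← Real.rpow_sub hr, sub_neg_eq_add]

/-- Condition (A-1) with any index `α ∈ (0, 2]` implies `hscale`, for every `q` in
`(2 ^ (1 - α / 2), 2)`. -/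
theorem sbm_green_asymp_alpha_two_general {d q : ℝ} {φ φ' u g : ℝ → ℝ} (hd : 2 < d)
    (hφ : IsSupergradientOn φ φ' (Ioi 0)) (hφ0 : ∀ l, 0 < l → 0 ≤ φ l)
    (hφ'pos : ∀ l, 0 < l → 0 < φ' l) (hq : q < 2)
    (hscale : ∀ᶠ l in atTop, φ' l ≤ q * φ' (2 * l))
    (hu0 : ∀ t, 0 < t → 0 ≤ u t) (hudec : AntitoneOn u (Ioi 0))
    (hu : ∀ l, 0 < l → laplaceTransform u l = 1 / φ l)
    (hg : ∀ r, 0 < r → g r = greenProfile d u r) :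
    (∃ c C r₀ : ℝ, 0 < c ∧ c ≤ C ∧ 0 < r₀ ∧ ∀ r, 0 < r → r < r₀ →
      c * (r ^ (-d + 2) / φ' (r ^ (-2 : ℝ))) ≤ g r ∧
      g r ≤ C * (r ^ (-d + 2) / φ' (r ^ (-2 : ℝ)))) ∧
    (∃ c C r₀ : ℝ, 0 < c ∧ c ≤ C ∧ 0 < r₀ ∧ ∀ r, 0 < r → r < r₀ →
      c * (r ^ (-d) / φ (r ^ (-2 : ℝ))) ≤ g r ∧
      g r ≤ C * (r ^ (-d) / φ (r ^ (-2 : ℝ)))) := by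
  have hg_eq : g =ᶠ[𝓝[>] 0] greenProfile d u := by
    filter_upwards [self_mem_nhdsWithin] with r hr using hg r hr
  have hg0 : ∀ r, 0 < r → 0 ≤ g r := fun r hr => (hg r hr).symm ▸ greenProfile_nonneg hu0 d r
  have hgφ : g =Θ[𝓝[>] 0] fun r => r ^ (-d) / φ (r ^ (-2 : ℝ)) := hg_eq.trans_isTheta
    (isTheta_greenProfile_of_isSupergradientOn hd hφ hφ0 hφ'pos hq hscale hu0 hudec hu)
  have hgφ' : g =Θ[𝓝[>] 0] fun r => r ^ (-d + 2) / φ' (r ^ (-2 : ℝ)) :=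
    hgφ.trans (isTheta_rpow_neg_div (hφ.isTheta_mul hφ0 hφ'pos hq hscale))
  refine ⟨exists_bounds_of_isTheta hg0 (fun r hr => ?_) hgφ',
    exists_bounds_of_isTheta hg0 (fun r hr => ?_) hgφ⟩
  · exact div_nonneg (by positivity) (hφ'pos _ (by positivity)).le
  · exact div_nonneg (by positivity) (hφ0 _ (by positivity))

/-- Under (A-1) with `α = 2` and (A-3), the Green function profile of the subordinate
Brownian motion satisfies `g(r) ≍ r^{-d+2}/φ'(r⁻²)` and `g(r) ≍ r^{-d}/φ(r⁻²)` as `r → 0+`. -/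
theorem sbm_green_asymp_alpha_two
    (d : ℕ) (hd : 3 ≤ d)
    (μ φ φ' : ℝ → ℝ)
    (hμpos : ∀ t, 0 < t → 0 < μ t)
    (hμdec : ∀ s t, 0 < s → s ≤ t → μ t ≤ μ s)
    (hμint : IntegrableOn (fun t => min 1 t * μ t) (Ioi 0))
    (hφ : ∀ l, 0 < l → φ l = ∫ t in Ioi (0:ℝ), (1 - Real.exp (-(l * t))) * μ t)
    (hφ' : ∀ l, 0 < l → φ' l = ∫ t in Ioi (0:ℝ), t * Real.exp (-(l * t)) * μ t)
    (hA1 : ∀ x, 0 < x →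
      Tendsto (fun l => φ' (l * x) / φ' l) atTop (𝓝 (1 : ℝ)))
    (u : ℝ → ℝ)
    (hupos : ∀ t, 0 < t → 0 < u t)
    (hudec : ∀ s t, 0 < s → s ≤ t → u t ≤ u s)
    (hu : ∀ l, 0 < l → ∫ t in Ioi (0:ℝ), Real.exp (-(l * t)) * u t = 1 / φ l)
    (g : ℝ → ℝ)
    (hg : ∀ r, 0 < r → g r =
      ∫ t in Ioi (0:ℝ), (4 * Real.pi * t) ^ (-(d:ℝ) / 2) * Real.exp (-(r ^ 2 / (4 * t))) * u t) :
    (∃ c C r₀ : ℝ, 0 < c ∧ c ≤ C ∧ 0 < r₀ ∧ ∀ r, 0 < r → r < r₀ →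
      c * (r ^ (-(d:ℝ) + 2) / φ' (r ^ (-2 : ℝ))) ≤ g r ∧
      g r ≤ C * (r ^ (-(d:ℝ) + 2) / φ' (r ^ (-2 : ℝ)))) ∧
    (∃ c C r₀ : ℝ, 0 < c ∧ c ≤ C ∧ 0 < r₀ ∧ ∀ r, 0 < r → r < r₀ →
      c * (r ^ (-(d:ℝ)) / φ (r ^ (-2 : ℝ))) ≤ g r ∧
      g r ≤ C * (r ^ (-(d:ℝ)) / φ (r ^ (-2 : ℝ)))) := by
  have hμ0 : ∀ t, 0 < t → 0 ≤ μ t := fun t ht => (hμpos t ht).le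
  have hφ'pos : ∀ l, 0 < l → 0 < φ' l := fun l hl =>
    (laplaceExponentDeriv_pos hμpos hμint hl).trans_eq (hφ' l hl).symm
  exact sbm_green_asymp_alpha_two_general (by exact_mod_cast hd)
    ((isSupergradientOn_laplaceExponent hμ0 hμint).congr hφ hφ')
    (fun l hl => (laplaceExponent_nonneg hμ0 hl.le).trans_eq (hφ l hl).symm) hφ'pos
    (show (3 / 2 : ℝ) < 2 by norm_num)
    (IsSlowlyVarying.eventually_le_mul hA1 hφ'pos (by norm_num) two_pos)
    (fun t ht => (hupos t ht).le) (fun s hs t _ hst => hudec s t hs hst) hu hg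
end

section
/- Let w : (0,∞) → (0,∞) be decreasing and suppose there are constants 0 < c₁ ≤ c₂, b ≥ 0, s₀ > 0 and a function ℓ : (0,∞) → (0,∞) slowly varying at 0 (i.e. ℓ(tx)/ℓ(t) → 1 as t → 0+ for every x > 0) such that c₁ t^{−b} ℓ(t) ≤ w(t) ≤ c₂ t^{−b} ℓ(t) for all t ∈ (0, s₀). Let p > 1 and define I(r) = ∫_0^∞ t^{−p} e^{−ar/t} w(t) dt for r > 0 and a > 0. Then there exist constants 0 < c ≤ C (depending only on w, p, b, c₁, c₂) such that for every a > 0 there is r₀ = r₀(a) > 0 with c · a^{−p−b+1} r^{−p+1} w(r) ≤ I(r) ≤ C · a^{−p−b+1} r^{−p+1} w(r) for all r ∈ (0, r₀). -/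
/-!
Slow variation makes `w (a * t)` comparable to `a ^ (-b) * w t` near `0`, with constants independent
of `a`. For `a = 1 / 2` this is a doubling condition, which together with monotonicity bounds
`w t / w R` on `(0, R]` by a multiple of a power of `R / t`. The factor `exp (-(R / t))` absorbs
that power, so the integrand of `∫ t ^ (-p) * exp (-(R / t)) * w t` is at most a multiple of
`R ^ (-p) * w R` on `(0, R]`, while beyond `R` it is at most `t ^ (-p) * w R`. On `(R / 2, R]` it is
also at least a multiple of `R ^ (-p) * w R`. Hence the integral is comparable to
`R ^ (1 - p) * w R`, and one sets `R = a * r`.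
-/

open MeasureTheory Set Filter Topology

variable {w ℓ : ℝ → ℝ} {c₁ c₂ d M p q R s t u x : ℝ}

/-- Slow variation at `0`: rescaling the argument of `ℓ` by a fixed factor is asymptotically
negligible at `0+`. Positivity of `ℓ` is not part of the definition. -/
def SlowlyVaryingAtZero (ℓ : ℝ → ℝ) : Prop :=
  ∀ x, 0 < x → Tendsto (fun t => ℓ (t * x) / ℓ t) (𝓝[>] 0) (𝓝 1)

/-- Homogeneity of degree `d` near `0` up to the constant `M`, which does not depend on the scaling
factor `x`, although the neighbourhood of `0` may. Only the upper estimate is imposed, because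
replacing `x` by `x⁻¹` gives the lower one. -/
def QuasiHomogeneousAtZero (w : ℝ → ℝ) (d M : ℝ) : Prop :=
  ∀ x, 0 < x → ∀ᶠ t in 𝓝[>] 0, w (x * t) ≤ M * x ^ d * w t

/-- The kernel `t ^ (-p) * exp (-(R / t))` against which `w` is integrated; `R` stands for the
product `a * r`. -/
noncomputable def expKernel (p R t : ℝ) : ℝ :=
  t ^ (-p) * Real.exp (-(R / t))

theorem eventually_forall_Ioc_of_eventually_nhdsGT {α : Type*} [LinearOrder α] [NoMaxOrder α]
    [TopologicalSpace α] [OrderTopology α] {a : α} {P : α → Prop} (h : ∀ᶠ t in 𝓝[>] a, P t) :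
    ∀ᶠ R in 𝓝[>] a, ∀ t ∈ Ioc a R, P t := by
  obtain ⟨δ, hδ, hP⟩ := mem_nhdsGT_iff_exists_Ioo_subset.1 h
  filter_upwards [Ioo_mem_nhdsGT hδ] with R hR t ht using hP ⟨ht.1, ht.2.trans_lt hR.2⟩

theorem SlowlyVaryingAtZero.quasiHomogeneousAtZero (hℓ : SlowlyVaryingAtZero ℓ)
    (hℓpos : ∀ᶠ t in 𝓝[>] 0, 0 < ℓ t) (hc₁ : 0 < c₁) (hc₂ : 0 ≤ c₂)
    (hlower : ∀ᶠ t in 𝓝[>] 0, c₁ * (t ^ d * ℓ t) ≤ w t)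
    (hupper : ∀ᶠ t in 𝓝[>] 0, w t ≤ c₂ * (t ^ d * ℓ t)) :
    QuasiHomogeneousAtZero w d (2 * c₂ / c₁) := by
  intro x hx
  filter_upwards [(hℓ x hx).eventually_lt_const one_lt_two, hℓpos, hlower,
    eventually_nhdsGT_zero_mul_left hx hupper, self_mem_nhdsWithin]
    with t hratio hℓt hwt hwtx (ht : 0 < t)
  have hℓtx : ℓ (t * x) ≤ 2 * ℓ t := ((div_lt_iff₀ hℓt).1 hratio).le
  calc w (x * t) ≤ c₂ * ((x * t) ^ d * ℓ (t * x)) := by rwa [mul_comm t x]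
    _ ≤ c₂ * ((x * t) ^ d * (2 * ℓ t)) := by gcongr
    _ = 2 * c₂ / c₁ * x ^ d * (c₁ * (t ^ d * ℓ t)) := by
      rw [Real.mul_rpow hx.le ht.le]; field_simp
    _ ≤ 2 * c₂ / c₁ * x ^ d * w t := by gcongr

theorem QuasiHomogeneousAtZero.rpow_mul_le (h : QuasiHomogeneousAtZero w d M) (hx : 0 < x) :
    ∀ᶠ t in 𝓝[>] 0, x ^ d * w t ≤ M * w (x * t) := by
  filter_upwards [eventually_nhdsGT_zero_mul_left hx (h x⁻¹ (inv_pos.2 hx))] with t ht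
  rw [inv_mul_cancel_left₀ hx.ne', Real.inv_rpow hx.le] at ht
  calc x ^ d * w t ≤ x ^ d * (M * (x ^ d)⁻¹ * w (x * t)) := by gcongr
    _ = M * w (x * t) := by field_simp

theorem QuasiHomogeneousAtZero.exists_doubling (h : QuasiHomogeneousAtZero w d M)
    (hw0 : ∀ᶠ t in 𝓝[>] 0, 0 ≤ w t) :
    ∃ q : ℝ, 0 ≤ q ∧ ∀ᶠ t in 𝓝[>] 0, w (t / 2) ≤ 2 ^ q * w t := by
  obtain ⟨m, hm⟩ := pow_unbounded_of_one_lt (M * 2⁻¹ ^ d) (one_lt_two (α := ℝ))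
  refine ⟨m, m.cast_nonneg, ?_⟩
  filter_upwards [h 2⁻¹ (by norm_num), hw0] with t ht hwt
  rw [Real.rpow_natCast, div_eq_inv_mul]
  exact ht.trans (by gcongr)

theorem apply_div_two_pow_le_of_doubling {D : ℝ} (hD : 0 ≤ D) (hR : 0 < R)
    (hdoub : ∀ t ∈ Ioc 0 R, w (t / 2) ≤ D * w t) (n : ℕ) :
    w (R / 2 ^ n) ≤ D ^ n * w R := by
  induction n with
  | zero => simp
  | succ n ih =>
    have hmem : R / 2 ^ n ∈ Ioc 0 R :=
      ⟨by positivity, div_le_self hR.le (one_le_pow₀ one_le_two)⟩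
    calc w (R / 2 ^ (n + 1)) = w (R / 2 ^ n / 2) := by rw [pow_succ, div_div]
      _ ≤ D * w (R / 2 ^ n) := hdoub _ hmem
      _ ≤ D * (D ^ n * w R) := by gcongr
      _ = D ^ (n + 1) * w R := by ring

theorem le_rpow_mul_of_antitoneOn_of_doubling (hw : AntitoneOn w (Ioi 0)) (hwR : 0 ≤ w R)
    (hq : 0 ≤ q) (hdoub : ∀ t ∈ Ioc 0 R, w (t / 2) ≤ 2 ^ q * w t) (ht : t ∈ Ioc 0 R) :
    w t ≤ 2 ^ q * (R / t) ^ q * w R := by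
  obtain ⟨ht0, htR⟩ := ht
  have hR : 0 < R := ht0.trans_le htR
  obtain ⟨n, hn, hn'⟩ := exists_nat_pow_near ((one_le_div ht0).2 htR) one_lt_two
  have hle : R / 2 ^ (n + 1) ≤ t := (div_lt_comm₀ ht0 (by positivity)).1 hn' |>.le
  calc w t ≤ w (R / 2 ^ (n + 1)) := hw (mem_Ioi.2 (by positivity)) ht0 hle
    _ ≤ (2 ^ q) ^ (n + 1) * w R :=
      apply_div_two_pow_le_of_doubling (by positivity) hR hdoub (n + 1)
    _ = 2 ^ q * (2 ^ n) ^ q * w R := by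
      rw [pow_succ', ← Real.rpow_pow_comm zero_le_two]
    _ ≤ 2 ^ q * (R / t) ^ q * w R := by gcongr

theorem rpow_le_rpow_self_mul_exp (hs : 0 < s) (hu : 0 ≤ u) :
    u ^ s ≤ s ^ s * Real.exp u := by
  have hexp : u / s ≤ Real.exp (u / s) := by linarith [Real.add_one_le_exp (u / s)]
  calc u ^ s = s ^ s * (u / s) ^ s := by
        rw [← Real.mul_rpow hs.le (by positivity), mul_div_cancel₀ u hs.ne']
    _ ≤ s ^ s * Real.exp (u / s) ^ s := by gcongr
    _ = s ^ s * Real.exp u := by rw [← Real.exp_mul, div_mul_cancel₀ u hs.ne']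

theorem expKernel_nonneg (ht : 0 ≤ t) : 0 ≤ expKernel p R t :=
  mul_nonneg (Real.rpow_nonneg ht _) (Real.exp_pos _).le

theorem expKernel_le_rpow (hR : 0 ≤ R) (ht : 0 ≤ t) : expKernel p R t ≤ t ^ (-p) :=
  mul_le_of_le_one_right (Real.rpow_nonneg ht _)
    (Real.exp_le_one_iff.2 (neg_nonpos.2 (div_nonneg hR ht)))

theorem expKernel_mul_rpow_le (hpq : 0 < p + q) (hR : 0 < R) (ht : 0 < t) :
    expKernel p R t * (R / t) ^ q ≤ (p + q) ^ (p + q) * R ^ (-p) := by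
  have hu : 0 < R / t := div_pos hR ht
  have hpow : t ^ (-p) = R ^ (-p) * (R / t) ^ p := by
    rw [Real.div_rpow hR.le ht.le, Real.rpow_neg ht.le, Real.rpow_neg hR.le]
    have := Real.rpow_pos_of_pos hR p
    field_simp
  calc expKernel p R t * (R / t) ^ q
      = R ^ (-p) * Real.exp (-(R / t)) * (R / t) ^ (p + q) := by
        rw [expKernel, hpow, Real.rpow_add hu]; ring
    _ ≤ R ^ (-p) * Real.exp (-(R / t)) * ((p + q) ^ (p + q) * Real.exp (R / t)) := by
        gcongr
        exact rpow_le_rpow_self_mul_exp hpq hu.le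
    _ = (p + q) ^ (p + q) * R ^ (-p) := by
        rw [Real.exp_neg]; field_simp

theorem exp_neg_two_mul_rpow_le_expKernel (hp : 0 ≤ p) (hR : 0 < R) (ht : t ∈ Ioc (R / 2) R) :
    Real.exp (-2) * R ^ (-p) ≤ expKernel p R t := by
  have ht0 : 0 < t := (half_pos hR).trans ht.1
  have hpow : R ^ (-p) ≤ t ^ (-p) := Real.rpow_le_rpow_of_nonpos ht0 ht.2 (neg_nonpos.2 hp)
  have hexp : -2 ≤ -(R / t) := neg_le_neg ((div_le_iff₀ ht0).2 (by linarith [ht.1]))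
  rw [mul_comm, expKernel]
  gcongr

theorem aestronglyMeasurable_expKernel_mul (hw : AntitoneOn w (Ioi 0)) :
    AEStronglyMeasurable (fun t => expKernel p R t * w t) (volume.restrict (Ioi 0)) := by
  have hkernel : Measurable (expKernel p R) := by unfold expKernel; fun_prop
  exact (hkernel.aemeasurable.mul
    (aemeasurable_restrict_of_antitoneOn measurableSet_Ioi hw)).aestronglyMeasurable

theorem expKernel_mul_le_of_mem_Ioc (hw : AntitoneOn w (Ioi 0)) (hwR : 0 ≤ w R)
    (hq : 0 ≤ q) (hpq : 0 < p + q) (hdoub : ∀ t ∈ Ioc 0 R, w (t / 2) ≤ 2 ^ q * w t)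
    (ht : t ∈ Ioc 0 R) :
    expKernel p R t * w t ≤ 2 ^ q * (p + q) ^ (p + q) * (R ^ (-p) * w R) := by
  have hkernel : 0 ≤ expKernel p R t := expKernel_nonneg ht.1.le
  calc expKernel p R t * w t ≤ expKernel p R t * (2 ^ q * (R / t) ^ q * w R) := by
        gcongr
        exact le_rpow_mul_of_antitoneOn_of_doubling hw hwR hq hdoub ht
    _ = 2 ^ q * (expKernel p R t * (R / t) ^ q) * w R := by ring
    _ ≤ 2 ^ q * ((p + q) ^ (p + q) * R ^ (-p)) * w R := by
        gcongr 2 ^ q * ?_ * w R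
        exact expKernel_mul_rpow_le hpq (ht.1.trans_le ht.2) ht.1
    _ = 2 ^ q * (p + q) ^ (p + q) * (R ^ (-p) * w R) := by ring

theorem expKernel_mul_le_of_mem_Ioi (hw : AntitoneOn w (Ioi 0)) (hwR : 0 ≤ w R) (hR : 0 < R)
    (ht : t ∈ Ioi R) : expKernel p R t * w t ≤ t ^ (-p) * w R := by
  have ht0 : 0 < t := hR.trans ht
  calc expKernel p R t * w t ≤ expKernel p R t * w R :=
        mul_le_mul_of_nonneg_left (hw hR ht0 ht.le) (expKernel_nonneg ht0.le)
    _ ≤ t ^ (-p) * w R := mul_le_mul_of_nonneg_right (expKernel_le_rpow hR.le ht0.le) hwR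

theorem norm_expKernel_mul (ht : 0 ≤ t) (hwt : 0 ≤ w t) :
    ‖expKernel p R t * w t‖ = expKernel p R t * w t :=
  Real.norm_of_nonneg (mul_nonneg (expKernel_nonneg ht) hwt)

theorem integrableOn_Ioc_expKernel_mul (hw : AntitoneOn w (Ioi 0)) (hw0 : ∀ t, 0 < t → 0 ≤ w t)
    (hR : 0 < R) (hq : 0 ≤ q) (hpq : 0 < p + q)
    (hdoub : ∀ t ∈ Ioc 0 R, w (t / 2) ≤ 2 ^ q * w t) :
    IntegrableOn (fun t => expKernel p R t * w t) (Ioc 0 R) := by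
  refine Integrable.mono'
    (integrable_const (2 ^ q * (p + q) ^ (p + q) * (R ^ (-p) * w R)))
    ((aestronglyMeasurable_expKernel_mul hw).mono_set Ioc_subset_Ioi_self) ?_
  filter_upwards [ae_restrict_mem measurableSet_Ioc] with t ht
  rw [norm_expKernel_mul ht.1.le (hw0 t ht.1)]
  exact expKernel_mul_le_of_mem_Ioc hw (hw0 R hR) hq hpq hdoub ht

theorem integrableOn_Ioi_expKernel_mul (hw : AntitoneOn w (Ioi 0)) (hw0 : ∀ t, 0 < t → 0 ≤ w t)
    (hR : 0 < R) (hp : 1 < p) : IntegrableOn (fun t => expKernel p R t * w t) (Ioi R) := by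
  refine Integrable.mono' ((integrableOn_Ioi_rpow_of_lt (neg_lt_neg hp) hR).mul_const (w R))
    ((aestronglyMeasurable_expKernel_mul hw).mono_set (Ioi_subset_Ioi hR.le)) ?_
  filter_upwards [ae_restrict_mem measurableSet_Ioi] with t ht
  rw [norm_expKernel_mul (hR.trans ht).le (hw0 t (hR.trans ht))]
  exact expKernel_mul_le_of_mem_Ioi hw (hw0 R hR) hR ht

theorem integrableOn_expKernel_mul (hw : AntitoneOn w (Ioi 0)) (hw0 : ∀ t, 0 < t → 0 ≤ w t)
    (hR : 0 < R) (hp : 1 < p) (hq : 0 ≤ q)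
    (hdoub : ∀ t ∈ Ioc 0 R, w (t / 2) ≤ 2 ^ q * w t) :
    IntegrableOn (fun t => expKernel p R t * w t) (Ioi 0) := by
  rw [← Ioc_union_Ioi_eq_Ioi hR.le]
  exact (integrableOn_Ioc_expKernel_mul hw hw0 hR hq (by linarith) hdoub).union
    (integrableOn_Ioi_expKernel_mul hw hw0 hR hp)

theorem setIntegral_Ioc_expKernel_mul_le (hw : AntitoneOn w (Ioi 0))
    (hw0 : ∀ t, 0 < t → 0 ≤ w t) (hR : 0 < R) (hq : 0 ≤ q) (hpq : 0 < p + q)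
    (hdoub : ∀ t ∈ Ioc 0 R, w (t / 2) ≤ 2 ^ q * w t) :
    ∫ t in Ioc 0 R, expKernel p R t * w t ≤
      2 ^ q * (p + q) ^ (p + q) * (R ^ (-p + 1) * w R) := by
  calc ∫ t in Ioc 0 R, expKernel p R t * w t
      ≤ ∫ _ in Ioc 0 R, 2 ^ q * (p + q) ^ (p + q) * (R ^ (-p) * w R) :=
        setIntegral_mono_on (integrableOn_Ioc_expKernel_mul hw hw0 hR hq hpq hdoub)
          (integrable_const _) measurableSet_Ioc
          fun t ht => expKernel_mul_le_of_mem_Ioc hw (hw0 R hR) hq hpq hdoub ht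
    _ = 2 ^ q * (p + q) ^ (p + q) * (R ^ (-p + 1) * w R) := by
        rw [setIntegral_const, Real.volume_real_Ioc_of_le hR.le, smul_eq_mul,
          Real.rpow_add_one hR.ne']
        ring

theorem setIntegral_Ioi_expKernel_mul_le (hw : AntitoneOn w (Ioi 0))
    (hw0 : ∀ t, 0 < t → 0 ≤ w t) (hR : 0 < R) (hp : 1 < p) :
    ∫ t in Ioi R, expKernel p R t * w t ≤ 1 / (p - 1) * (R ^ (-p + 1) * w R) := by
  calc ∫ t in Ioi R, expKernel p R t * w t ≤ ∫ t in Ioi R, t ^ (-p) * w R :=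
        setIntegral_mono_on (integrableOn_Ioi_expKernel_mul hw hw0 hR hp)
          ((integrableOn_Ioi_rpow_of_lt (neg_lt_neg hp) hR).mul_const (w R)) measurableSet_Ioi
          fun t ht => expKernel_mul_le_of_mem_Ioi hw (hw0 R hR) hR ht
    _ = 1 / (p - 1) * (R ^ (-p + 1) * w R) := by
        rw [integral_mul_const, integral_Ioi_rpow_of_lt (neg_lt_neg hp) hR,
          show -p + 1 = -(p - 1) by ring, neg_div_neg_eq]
        ring

theorem setIntegral_expKernel_mul_le (hw : AntitoneOn w (Ioi 0))
    (hw0 : ∀ t, 0 < t → 0 ≤ w t) (hR : 0 < R) (hp : 1 < p) (hq : 0 ≤ q)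
    (hdoub : ∀ t ∈ Ioc 0 R, w (t / 2) ≤ 2 ^ q * w t) :
    ∫ t in Ioi 0, expKernel p R t * w t ≤
      (2 ^ q * (p + q) ^ (p + q) + 1 / (p - 1)) * (R ^ (-p + 1) * w R) := by
  have hpq : 0 < p + q := by linarith
  rw [← Ioc_union_Ioi_eq_Ioi hR.le,
    setIntegral_union (Ioc_disjoint_Ioi le_rfl) measurableSet_Ioi
      (integrableOn_Ioc_expKernel_mul hw hw0 hR hq hpq hdoub)
      (integrableOn_Ioi_expKernel_mul hw hw0 hR hp), add_mul]
  exact add_le_add (setIntegral_Ioc_expKernel_mul_le hw hw0 hR hq hpq hdoub)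
    (setIntegral_Ioi_expKernel_mul_le hw hw0 hR hp)

theorem le_setIntegral_expKernel_mul (hw : AntitoneOn w (Ioi 0)) (hw0 : ∀ t, 0 < t → 0 ≤ w t)
    (hR : 0 < R) (hp : 0 ≤ p) (hint : IntegrableOn (fun t => expKernel p R t * w t) (Ioi 0)) :
    Real.exp (-2) / 2 * (R ^ (-p + 1) * w R) ≤ ∫ t in Ioi 0, expKernel p R t * w t := by
  have hsub : Ioc (R / 2) R ⊆ Ioi 0 := fun t ht => (half_pos hR).trans ht.1
  calc Real.exp (-2) / 2 * (R ^ (-p + 1) * w R)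
      = ∫ _ in Ioc (R / 2) R, Real.exp (-2) * R ^ (-p) * w R := by
        rw [setIntegral_const, Real.volume_real_Ioc_of_le (half_le_self hR.le), smul_eq_mul,
          Real.rpow_add_one hR.ne']
        ring
    _ ≤ ∫ t in Ioc (R / 2) R, expKernel p R t * w t :=
        setIntegral_mono_on (integrable_const _) (hint.mono_set hsub) measurableSet_Ioc
          fun t ht => mul_le_mul (exp_neg_two_mul_rpow_le_expKernel hp hR ht)
            (hw (hsub ht) hR ht.2) (hw0 R hR) (expKernel_nonneg (hsub ht).le)
    _ ≤ ∫ t in Ioi 0, expKernel p R t * w t := by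
        refine setIntegral_mono_set hint ?_ hsub.eventuallyLE
        filter_upwards [ae_restrict_mem measurableSet_Ioi] with t (ht : 0 < t)
        exact mul_nonneg (expKernel_nonneg ht.le) (hw0 t ht)

theorem exists_setIntegral_expKernel_mul_bounds_of_doubling (hw : AntitoneOn w (Ioi 0))
    (hw0 : ∀ t, 0 < t → 0 ≤ w t) (hp : 1 < p) (hq : 0 ≤ q)
    (hdoub : ∀ᶠ t in 𝓝[>] 0, w (t / 2) ≤ 2 ^ q * w t) :
    ∃ A B : ℝ, 0 < A ∧ 0 < B ∧ ∀ᶠ R in 𝓝[>] 0,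
      A * (R ^ (-p + 1) * w R) ≤ ∫ t in Ioi 0, expKernel p R t * w t ∧
      ∫ t in Ioi 0, expKernel p R t * w t ≤ B * (R ^ (-p + 1) * w R) := by
  have hp0 : 0 < p := by linarith
  refine ⟨Real.exp (-2) / 2, 2 ^ q * (p + q) ^ (p + q) + 1 / (p - 1), by positivity,
    add_pos (by positivity) (one_div_pos.2 (sub_pos.2 hp)), ?_⟩
  filter_upwards [eventually_forall_Ioc_of_eventually_nhdsGT hdoub, self_mem_nhdsWithin]
    with R hdoubR (hR : 0 < R)
  exact ⟨le_setIntegral_expKernel_mul hw hw0 hR hp0.le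
      (integrableOn_expKernel_mul hw hw0 hR hp hq hdoubR),
    setIntegral_expKernel_mul_le hw hw0 hR hp hq hdoubR⟩

theorem QuasiHomogeneousAtZero.exists_setIntegral_expKernel_mul_bounds
    (h : QuasiHomogeneousAtZero w d M) (hM : 0 < M) (hw : AntitoneOn w (Ioi 0))
    (hw0 : ∀ t, 0 < t → 0 ≤ w t) (hp : 1 < p) :
    ∃ c C : ℝ, 0 < c ∧ c ≤ C ∧ ∀ a : ℝ, 0 < a → ∀ᶠ r in 𝓝[>] 0,
      c * (a ^ (-p + d + 1) * r ^ (-p + 1) * w r) ≤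
        ∫ t in Ioi 0, expKernel p (a * r) t * w t ∧
      ∫ t in Ioi 0, expKernel p (a * r) t * w t ≤
        C * (a ^ (-p + d + 1) * r ^ (-p + 1) * w r) := by
  obtain ⟨q, hq, hdoub⟩ := h.exists_doubling (eventually_mem_nhdsWithin.mono hw0)
  obtain ⟨A, B, hA, hB, hAB⟩ :=
    exists_setIntegral_expKernel_mul_bounds_of_doubling hw hw0 hp hq hdoub
  refine ⟨A / M, max (A / M) (B * M), by positivity, le_max_left _ _, fun a ha => ?_⟩
  filter_upwards [eventually_nhdsGT_zero_mul_left ha hAB, h a ha, h.rpow_mul_le ha,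
    self_mem_nhdsWithin] with r ⟨hlower, hupper⟩ hwle hlew (hr : 0 < r)
  have hwr : 0 ≤ w r := hw0 r hr
  have hsplit : a ^ (-p + d + 1) * r ^ (-p + 1) * w r = (a * r) ^ (-p + 1) * (a ^ d * w r) := by
    rw [Real.mul_rpow ha.le hr.le, show -p + d + 1 = -p + 1 + d by ring, Real.rpow_add ha]
    ring
  rw [hsplit]
  constructor
  · calc A / M * ((a * r) ^ (-p + 1) * (a ^ d * w r))
        ≤ A / M * ((a * r) ^ (-p + 1) * (M * w (a * r))) := by gcongr
      _ = A * ((a * r) ^ (-p + 1) * w (a * r)) := by field_simp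
      _ ≤ _ := hlower
  · calc _ ≤ B * ((a * r) ^ (-p + 1) * w (a * r)) := hupper
      _ ≤ B * ((a * r) ^ (-p + 1) * (M * a ^ d * w r)) := by gcongr
      _ = B * M * ((a * r) ^ (-p + 1) * (a ^ d * w r)) := by ring
      _ ≤ max (A / M) (B * M) * ((a * r) ^ (-p + 1) * (a ^ d * w r)) := by
        gcongr
        exact le_max_right _ _

/-- Asymptotic lemma: if `w` is decreasing and comparable to `t^{-b} ℓ(t)` near `0` with `ℓ`
slowly varying at `0`, then for `p > 1` the integral `I(r) = ∫₀^∞ t^{-p} e^{-ar/t} w(t) dt`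
satisfies `I(r) ≍ a^{-p-b+1} r^{-p+1} w(r)` as `r → 0+`, with comparison constants independent
of `a`. -/
theorem asymptotic_lemma
    (w ℓ : ℝ → ℝ)
    (hwpos : ∀ t, 0 < t → 0 < w t)
    (hwdec : ∀ s t, 0 < s → s ≤ t → w t ≤ w s)
    (hℓpos : ∀ t, 0 < t → 0 < ℓ t)
    (hℓslow : ∀ x, 0 < x → Tendsto (fun t => ℓ (t * x) / ℓ t) (𝓝[>] (0:ℝ)) (𝓝 1))
    (b : ℝ) (hb : 0 ≤ b)
    (c₁ c₂ s₀ : ℝ) (hc₁ : 0 < c₁) (hc₁₂ : c₁ ≤ c₂) (hs₀ : 0 < s₀)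
    (hcomp : ∀ t, 0 < t → t < s₀ →
      c₁ * (t ^ (-b) * ℓ t) ≤ w t ∧ w t ≤ c₂ * (t ^ (-b) * ℓ t))
    (p : ℝ) (hp : 1 < p) :
    ∃ c C : ℝ, 0 < c ∧ c ≤ C ∧ ∀ a : ℝ, 0 < a → ∃ r₀ : ℝ, 0 < r₀ ∧
      ∀ r, 0 < r → r < r₀ →
        c * (a ^ (-p - b + 1) * r ^ (-p + 1) * w r) ≤
          (∫ t in Ioi (0:ℝ), t ^ (-p) * Real.exp (-(a * r / t)) * w t) ∧
        (∫ t in Ioi (0:ℝ), t ^ (-p) * Real.exp (-(a * r / t)) * w t) ≤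
          C * (a ^ (-p - b + 1) * r ^ (-p + 1) * w r) := by
  have hnear : ∀ᶠ t in 𝓝[>] 0, t ∈ Ioo 0 s₀ := Ioo_mem_nhdsGT hs₀
  have hc₂ : 0 < c₂ := hc₁.trans_le hc₁₂
  have hquasi : QuasiHomogeneousAtZero w (-b) (2 * c₂ / c₁) :=
    SlowlyVaryingAtZero.quasiHomogeneousAtZero hℓslow (eventually_mem_nhdsWithin.mono hℓpos)
      hc₁ hc₂.le (hnear.mono fun t ht => (hcomp t ht.1 ht.2).1)
      (hnear.mono fun t ht => (hcomp t ht.1 ht.2).2)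
  obtain ⟨c, C, hc, hcC, hbounds⟩ := hquasi.exists_setIntegral_expKernel_mul_bounds
    (by positivity) (fun s hs t _ hst => hwdec s t hs hst) (fun t ht => (hwpos t ht).le) hp
  simp only [← sub_eq_add_neg, expKernel] at hbounds
  refine ⟨c, C, hc, hcC, fun a ha => ?_⟩
  obtain ⟨r₀, hr₀, hr⟩ := mem_nhdsGT_iff_exists_Ioo_subset.1 (hbounds a ha)
  exact ⟨r₀, hr₀, fun r hr0 hrr₀ => hr ⟨hr0, hrr₀⟩⟩
end

section
/- Let d ≥ 3 be an integer, assume condition (A-1) holds with some index α ∈ [0,2] (with condition (A-4) in addition when α = 2) and condition (A-3) holds, and define G(x) = g(|x|) for x ∈ ℝ^d \ {0}, where g is the radial Green function profile. Then there is a constant c > 0 such that for every r ∈ (0,1) and all x, y ∈ ℝ^d with |x| ≥ r and |y| ≥ r: |G(x) − G(y)| ≤ c · g(r) · min(1, |x−y|/r). -/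
open MeasureTheory Set Filter Topology

/-!
Put `U = 1 / φ`, the Laplace transform of `u`; then `V = -U' = φ' / φ²` is the Laplace transform of
`t ↦ t * u t`. A l'Hôpital argument turns the regular variation of `φ'` into `V (2l) ≤ θ * V l` for
some `θ < 1` and all large `l`; working with `V` instead of `U` is what makes the slowly varying
case `α = 0` possible. Since `u` is decreasing, an elementary Tauberian argument gives
`u s ≤ C * u (4s)` for small `s`, and scaling in the Gaussian mixture transfers this doubling
property to `g (r/2) ≤ D * g r`. Finally `x e^{-x} ≤ 2 e^{-x/4}` bounds the increments of `g` by
its value at half the radius: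
`g a - g b ≤ 2 (b² - a²) / a² * g (a/2)` for `a ≤ b`.
-/

namespace SubordinateBrownian

section GeneralLemmas

lemma setIntegral_Ioi_pos {f : ℝ → ℝ} (hf : IntegrableOn f (Ioi 0))
    (hpos : ∀ t, 0 < t → 0 < f t) : 0 < ∫ t in Ioi (0 : ℝ), f t := by
  have hsupport : Function.support f ∩ Ioi 0 = Ioi 0 :=
    inter_eq_right.2 fun t ht => (hpos t ht).ne'
  rw [setIntegral_pos_iff_support_of_nonneg_ae _ hf, hsupport]
  · simp
  · filter_upwards [ae_restrict_mem measurableSet_Ioi] with t ht using (hpos t ht).le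

lemma integrableOn_mul_of_abs_le {β : Type*} [MeasurableSpace β] {m : Measure β} {s : Set β}
    {f h w : β → ℝ} {C : ℝ} (hs : MeasurableSet s) (hf : Measurable f) (hh : Measurable h)
    (hpos : ∀ t ∈ s, 0 < h t) (hle : ∀ t ∈ s, |f t| ≤ C * h t)
    (hhw : IntegrableOn (fun t => h t * w t) s m) :
    IntegrableOn (fun t => f t * w t) s m := by
  have hbdd : ∀ᵐ t ∂m.restrict s, ‖f t / h t‖ ≤ C := by
    filter_upwards [ae_restrict_mem hs] with t ht
    rw [Real.norm_eq_abs, abs_div, abs_of_pos (hpos t ht), div_le_iff₀ (hpos t ht)]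
    exact hle t ht
  refine (hhw.bdd_mul (hf.div hh).aestronglyMeasurable hbdd).congr ?_
  filter_upwards [ae_restrict_mem hs] with t ht
  rw [Pi.div_apply, ← mul_assoc, div_mul_cancel₀ _ (hpos t ht).ne']

lemma norm_exp_mul_le {a b : ℝ} (hab : a ≤ b) (y : ℝ) :
    ‖Real.exp a * y‖ ≤ ‖Real.exp b * y‖ := by
  rw [norm_mul, norm_mul, Real.norm_of_nonneg (Real.exp_nonneg a),
    Real.norm_of_nonneg (Real.exp_nonneg b)]
  gcongr

lemma mul_exp_neg_mul_le {l : ℝ} (hl : 0 < l) (t : ℝ) : t * Real.exp (-(l * t)) ≤ 1 / l := by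
  have h := (Real.mul_exp_neg_le_exp_neg_one (l * t)).trans
    (Real.exp_le_one_iff.2 (by norm_num : (-1 : ℝ) ≤ 0))
  rw [le_div_iff₀ hl]
  linarith

lemma rpow_neg_mul_exp_neg_div_le {ν q t : ℝ} (hν : 0 < ν) (hq : 0 < q) (ht : 0 < t) :
    t ^ (-ν) * Real.exp (-(q / t)) ≤ (ν / q) ^ ν := by
  have hexp : 1 / t ≤ ν / q * Real.exp (q / t / ν) := by
    have h := (lt_add_one _).le.trans (Real.add_one_le_exp (q / t / ν))
    calc 1 / t = ν / q * (q / t / ν) := by field_simp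
      _ ≤ _ := by gcongr
  calc t ^ (-ν) * Real.exp (-(q / t)) = (1 / t) ^ ν * Real.exp (-(q / t)) := by
        rw [Real.rpow_neg ht.le, one_div, Real.inv_rpow ht.le]
    _ ≤ (ν / q * Real.exp (q / t / ν)) ^ ν * Real.exp (-(q / t)) := by gcongr
    _ = (ν / q) ^ ν * (Real.exp (q / t) * Real.exp (-(q / t))) := by
        rw [Real.mul_rpow (by positivity) (by positivity), ← Real.exp_mul,
          div_mul_cancel₀ _ hν.ne', mul_assoc]
    _ = (ν / q) ^ ν := by rw [← Real.exp_add, add_neg_cancel, Real.exp_zero, mul_one]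

lemma eventually_mul_le_of_mul_deriv_le {f g f' g' : ℝ → ℝ} {c c' : ℝ}
    (hf : ∀ᶠ x in atTop, HasDerivAt f (f' x) x) (hg : ∀ᶠ x in atTop, HasDerivAt g (g' x) x)
    (hle : ∀ᶠ x in atTop, c' * g' x ≤ f' x) (htop : Tendsto g atTop atTop) (hc : c < c') :
    ∀ᶠ x in atTop, c * g x ≤ f x := by
  obtain ⟨A, hA⟩ := eventually_atTop.1 ((hf.and hg).and hle)
  have hderiv : ∀ x, A ≤ x → HasDerivAt (fun y => f y - c' * g y) (f' x - c' * g' x) x :=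
    fun x hx => (hA x hx).1.1.sub ((hA x hx).1.2.const_mul c')
  have hmono : MonotoneOn (fun y => f y - c' * g y) (Ici A) := by
    refine monotoneOn_of_hasDerivWithinAt_nonneg (f' := fun x => f' x - c' * g' x) (convex_Ici A)
      (fun x hx => (hderiv x hx).continuousAt.continuousWithinAt)
      (fun x hx => (hderiv x (interior_subset hx)).hasDerivWithinAt)
      (fun x hx => sub_nonneg.2 (hA x (interior_subset hx)).2)
  filter_upwards [eventually_ge_atTop A,
    htop.eventually_ge_atTop ((c' * g A - f A) / (c' - c))] with x hx hgx
  have hincr : f A - c' * g A ≤ f x - c' * g x := hmono self_mem_Ici hx hx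
  rw [div_le_iff₀ (sub_pos.2 hc)] at hgx
  linarith

end GeneralLemmas

section Laplace

/-- The Laplace transform at `l` of the density `w` on `(0, ∞)`. -/
noncomputable def laplace (w : ℝ → ℝ) (l : ℝ) : ℝ :=
  ∫ t in Ioi (0 : ℝ), Real.exp (-(l * t)) * w t

/-- The density `w` has an absolutely convergent Laplace transform on all of `(0, ∞)`. -/
def LaplaceIntegrable (w : ℝ → ℝ) : Prop :=
  ∀ l, 0 < l → IntegrableOn (fun t => Real.exp (-(l * t)) * w t) (Ioi 0)

variable {w : ℝ → ℝ}

lemma laplace_nonneg (hw : ∀ t, 0 < t → 0 ≤ w t) (l : ℝ) : 0 ≤ laplace w l :=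
  setIntegral_nonneg measurableSet_Ioi fun t ht => mul_nonneg (Real.exp_nonneg _) (hw t ht)

lemma LaplaceIntegrable.id_mul (hw : LaplaceIntegrable w) :
    LaplaceIntegrable fun t => t * w t := by
  intro l hl
  have h := integrableOn_mul_of_abs_le (f := fun t => Real.exp (-(l * t)) * t) (C := 1 / (l / 2))
    measurableSet_Ioi (by fun_prop) (by fun_prop) (fun t _ => Real.exp_pos _) ?_
    (hw (l / 2) (half_pos hl))
  · simpa only [mul_assoc] using h
  · intro t ht
    have ht0 : 0 < t := ht
    have hsplit : Real.exp (-(l * t)) = Real.exp (-(l / 2 * t)) * Real.exp (-(l / 2 * t)) := by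
      rw [← Real.exp_add]
      ring_nf
    rw [abs_of_nonneg (by positivity), hsplit, mul_comm, ← mul_assoc]
    exact mul_le_mul_of_nonneg_right (mul_exp_neg_mul_le (half_pos hl) t) (Real.exp_nonneg _)

lemma tendsto_laplace_atTop_zero (hw : LaplaceIntegrable w) :
    Tendsto (laplace w) atTop (𝓝 0) := by
  rw [← integral_zero ℝ ℝ (μ := volume.restrict (Ioi 0))]
  refine tendsto_integral_filter_of_dominated_convergence
    (fun t => ‖Real.exp (-(1 * t)) * w t‖) ?_ ?_ (hw 1 one_pos).norm ?_
  · filter_upwards [eventually_gt_atTop 0] with l hl using (hw l hl).aestronglyMeasurable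
  · filter_upwards [eventually_ge_atTop 1] with l hl
    filter_upwards [ae_restrict_mem measurableSet_Ioi] with t ht
    have ht0 : 0 < t := ht
    exact norm_exp_mul_le (by gcongr) _
  · filter_upwards [ae_restrict_mem measurableSet_Ioi] with t ht
    have hexp : Tendsto (fun l : ℝ => Real.exp (-(l * t))) atTop (𝓝 0) :=
      Real.tendsto_exp_neg_atTop_nhds_zero.comp (tendsto_id.atTop_mul_const ht)
    simpa only [zero_mul] using hexp.mul_const (w t)

/- The constant `c` is `0` for Laplace transforms and `1` for Bernstein functions. -/
lemma hasDerivAt_integral_const_sub_exp_mul {c l : ℝ} (hl : 0 < l)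
    (hw : ∀ l, 0 < l → IntegrableOn (fun t => (c - Real.exp (-(l * t))) * w t) (Ioi 0))
    (htw : LaplaceIntegrable fun t => t * w t) :
    HasDerivAt (fun l => ∫ t in Ioi (0 : ℝ), (c - Real.exp (-(l * t))) * w t)
      (laplace (fun t => t * w t) l) l := by
  refine (hasDerivAt_integral_of_dominated_loc_of_deriv_le
    (F := fun l t => (c - Real.exp (-(l * t))) * w t)
    (F' := fun l t => Real.exp (-(l * t)) * (t * w t))
    (bound := fun t => ‖Real.exp (-(l / 2 * t)) * (t * w t)‖)
    (Ioi_mem_nhds (half_lt_self hl)) ?_ (hw l hl) (htw l hl).aestronglyMeasurable ?_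
    (htw (l / 2) (half_pos hl)).norm ?_).2
  · filter_upwards [Ioi_mem_nhds hl] with x hx using (hw x hx).aestronglyMeasurable
  · filter_upwards [ae_restrict_mem measurableSet_Ioi] with t ht x hx
    have ht0 : 0 < t := ht
    exact norm_exp_mul_le (by gcongr; exact (mem_Ioi.1 hx).le) _
  · filter_upwards with t x _
    have hlin : HasDerivAt (fun x : ℝ => -(x * t)) (-t) x := by
      simpa using! ((hasDerivAt_id x).mul_const t).neg
    have hexp := (hlin.exp.const_sub c).mul_const (w t)
    rwa [mul_neg, neg_neg, mul_assoc] at hexp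

lemma hasDerivAt_laplace (hw : LaplaceIntegrable w) {l : ℝ} (hl : 0 < l) :
    HasDerivAt (laplace w) (-laplace (fun t => t * w t) l) l := by
  have hneg : ∀ l, 0 < l →
      IntegrableOn (fun t => (0 - Real.exp (-(l * t))) * w t) (Ioi 0) := fun l hl => by
    simpa only [zero_sub, neg_mul] using! (hw l hl).neg
  have h := (hasDerivAt_integral_const_sub_exp_mul hl hneg hw.id_mul).neg
  simp only [zero_sub, neg_mul, integral_neg] at h
  simpa only [Pi.neg_def, neg_neg] using! h

lemma laplaceIntegrable_of_laplace_eq_one_div {φ : ℝ → ℝ} (hφ0 : ∀ l, 0 < l → φ l ≠ 0)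
    (hwφ : ∀ l, 0 < l → laplace w l = 1 / φ l) : LaplaceIntegrable w := fun l hl =>
  .of_integral_ne_zero ((hwφ l hl).trans_ne (one_div_ne_zero (hφ0 l hl)))

lemma LaplaceIntegrable.integrableOn_Ioc (hw : LaplaceIntegrable w) (s : ℝ) :
    IntegrableOn w (Ioc 0 s) := by
  have h := integrableOn_mul_of_abs_le (s := Ioc 0 s) (f := fun _ => 1) (C := Real.exp s)
    measurableSet_Ioc (by fun_prop) (by fun_prop) (fun t _ => Real.exp_pos (-(1 * t)))
    (fun t ht => ?_) ((hw 1 one_pos).mono_set fun t ht => ht.1)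
  · simpa only [one_mul] using h
  · rw [abs_one, ← Real.exp_add, Real.one_le_exp_iff]
    linarith [ht.2]

lemma laplace_id_mul_eq_of_laplace_eq_one_div {φ φ' : ℝ → ℝ} (hw : LaplaceIntegrable w)
    (hφ0 : ∀ l, 0 < l → φ l ≠ 0) (hφ : ∀ l, 0 < l → HasDerivAt φ (φ' l) l)
    (hwφ : ∀ l, 0 < l → laplace w l = 1 / φ l) {l : ℝ} (hl : 0 < l) :
    laplace (fun t => t * w t) l = φ' l / φ l ^ 2 := by
  have hinv : HasDerivAt (laplace w) (-φ' l / φ l ^ 2) l := by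
    refine ((hφ l hl).inv (hφ0 l hl)).congr_of_eventuallyEq ?_
    filter_upwards [Ioi_mem_nhds hl] with s hs
    rw [hwφ s hs, one_div, Pi.inv_apply]
  have h := (hasDerivAt_laplace hw hl).unique hinv
  rwa [neg_div, neg_inj] at h

end Laplace

section Bernstein

variable {μ φ φ' : ℝ → ℝ}

lemma integrableOn_one_sub_exp_mul (hμ : IntegrableOn (fun t => min 1 t * μ t) (Ioi 0))
    {l : ℝ} (hl : 0 < l) :
    IntegrableOn (fun t => (1 - Real.exp (-(l * t))) * μ t) (Ioi 0) := by
  refine integrableOn_mul_of_abs_le (C := 1 + l) measurableSet_Ioi (by fun_prop) (by fun_prop)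
    (fun t ht => lt_min one_pos ht) (fun t ht => ?_) hμ
  have ht0 : 0 < t := ht
  have hexp : Real.exp (-(l * t)) ≤ 1 := Real.exp_le_one_iff.2 (by nlinarith)
  have htangent := Real.add_one_le_exp (-(l * t))
  rw [abs_of_nonneg (sub_nonneg.2 hexp)]
  rcases le_total 1 t with h | h
  · rw [min_eq_left h]
    linarith [Real.exp_pos (-(l * t))]
  · rw [min_eq_right h]
    linarith

lemma laplaceIntegrable_id_mul_of_min_one (hμ : IntegrableOn (fun t => min 1 t * μ t) (Ioi 0)) :
    LaplaceIntegrable fun t => t * μ t := by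
  intro l hl
  have h := integrableOn_mul_of_abs_le (f := fun t => Real.exp (-(l * t)) * t) (C := 1 + 1 / l)
    measurableSet_Ioi (by fun_prop) (by fun_prop) (fun t ht => lt_min one_pos ht) ?_ hμ
  · simpa only [mul_assoc] using h
  · intro t ht
    have ht0 : 0 < t := ht
    have hexp : Real.exp (-(l * t)) ≤ 1 := Real.exp_le_one_iff.2 (by nlinarith)
    rw [abs_of_nonneg (by positivity)]
    rcases le_total 1 t with h | h
    · rw [min_eq_left h]
      linarith [mul_exp_neg_mul_le hl t]
    · rw [min_eq_right h]
      have : 0 < 1 / l * t := by positivity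
      nlinarith

lemma bernstein_pos (hpos : ∀ t, 0 < t → 0 < μ t)
    (hμ : IntegrableOn (fun t => min 1 t * μ t) (Ioi 0))
    (hφ : ∀ l, 0 < l → φ l = ∫ t in Ioi (0 : ℝ), (1 - Real.exp (-(l * t))) * μ t)
    {l : ℝ} (hl : 0 < l) : 0 < φ l := by
  rw [hφ l hl]
  exact setIntegral_Ioi_pos (integrableOn_one_sub_exp_mul hμ hl) fun t ht =>
    mul_pos (sub_pos.2 (Real.exp_lt_one_iff.2 (neg_lt_zero.2 (mul_pos hl ht)))) (hpos t ht)

lemma hasDerivAt_bernstein (hμ : IntegrableOn (fun t => min 1 t * μ t) (Ioi 0))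
    (hφ : ∀ l, 0 < l → φ l = ∫ t in Ioi (0 : ℝ), (1 - Real.exp (-(l * t))) * μ t)
    (hφ' : ∀ l, 0 < l → φ' l = ∫ t in Ioi (0 : ℝ), t * Real.exp (-(l * t)) * μ t)
    {l : ℝ} (hl : 0 < l) : HasDerivAt φ (φ' l) l := by
  have hlaplace : laplace (fun t => t * μ t) l = φ' l := by
    rw [hφ' l hl]
    refine setIntegral_congr_fun measurableSet_Ioi fun t _ => ?_
    ring
  rw [← hlaplace]
  refine (hasDerivAt_integral_const_sub_exp_mul hl (fun _ h => integrableOn_one_sub_exp_mul hμ h)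
    (laplaceIntegrable_id_mul_of_min_one hμ)).congr_of_eventuallyEq ?_
  filter_upwards [Ioi_mem_nhds hl] with s hs using hφ s hs

end Bernstein

section Tauberian

/- By l'Hôpital `φ (2l) / φ l → 2ρ`, so the ratio of `φ' / φ ^ 2` at `2l` and `l` tends to
`ρ / (2ρ) ^ 2 = 1 / (4ρ) < 1`. -/
lemma exists_eventually_div_sq_two_mul_le {φ φ' : ℝ → ℝ} {ρ : ℝ} (hρ : 1 / 4 < ρ)
    (hφ : ∀ l, 0 < l → HasDerivAt φ (φ' l) l) (hφ' : ∀ l, 0 < l → 0 ≤ φ' l)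
    (htop : Tendsto φ atTop atTop)
    (hratio : Tendsto (fun l => φ' (2 * l) / φ' l) atTop (𝓝 ρ)) :
    ∃ θ < 1, ∀ᶠ l in atTop, φ' (2 * l) / φ (2 * l) ^ 2 ≤ θ * (φ' l / φ l ^ 2) := by
  have hφ'pos : ∀ᶠ l in atTop, 0 < φ' l := by
    filter_upwards [eventually_gt_atTop 0, hratio.eventually_ne (by linarith : ρ ≠ 0)]
      with l hl hne
    exact (hφ' l hl).lt_of_ne' (div_ne_zero_iff.1 hne).2
  obtain ⟨c, hc, hc2⟩ := exists_between
    (show √ρ < 2 * ρ from (Real.sqrt_lt' (by linarith)).2 (by nlinarith))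
  obtain ⟨c', hcc', hc'2⟩ := exists_between hc2
  have hc0 : 0 < c := (Real.sqrt_nonneg ρ).trans_lt hc
  obtain ⟨σ, hρσ, hσc⟩ := exists_between ((Real.sqrt_lt' hc0).1 hc)
  have hφgrowth : ∀ᶠ l in atTop, c * φ l ≤ φ (2 * l) := by
    refine eventually_mul_le_of_mul_deriv_le (f' := fun l => φ' (2 * l) * 2) (g' := φ') (c' := c')
      ?_ ?_ ?_ htop hcc'
    · filter_upwards [eventually_gt_atTop 0] with l hl
      exact (hφ (2 * l) (by linarith)).comp l (by simpa using (hasDerivAt_id l).const_mul 2)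
    · filter_upwards [eventually_gt_atTop 0] with l hl using hφ l hl
    · filter_upwards [hφ'pos, hratio.eventually_const_le (by linarith : c' / 2 < ρ)] with l hl hle
      rw [le_div_iff₀ hl] at hle
      linarith
  refine ⟨σ / c ^ 2, (div_lt_one (by positivity)).2 hσc, ?_⟩
  filter_upwards [hφ'pos, hφgrowth, hratio.eventually_le_const hρσ, htop.eventually_gt_atTop 0]
    with l hl hgrowth hle hφl
  rw [div_le_iff₀ hl] at hle
  have hσ : 0 < σ := by linarith
  calc φ' (2 * l) / φ (2 * l) ^ 2 ≤ σ * φ' l / (c * φ l) ^ 2 := by gcongr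
    _ = σ / c ^ 2 * (φ' l / φ l ^ 2) := by
      field_simp

variable {u : ℝ → ℝ}

lemma mul_sq_le_laplace_id_mul (hu0 : ∀ t, 0 < t → 0 ≤ u t) (hanti : AntitoneOn u (Ioi 0))
    (hu : LaplaceIntegrable u) {l s : ℝ} (hl : 0 < l) (hs : 0 < s) :
    u s * s ^ 2 ≤ 2 * Real.exp (l * s) * laplace (fun t => t * u t) l := by
  have hint := hu.id_mul l hl
  have hconst : ∫ t in Ioc 0 s, Real.exp (-(l * s)) * u s * t =
      Real.exp (-(l * s)) * u s * (s ^ 2 / 2) := by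
    rw [← intervalIntegral.integral_of_le hs.le, intervalIntegral.integral_const_mul, integral_id]
    ring
  have hlower : Real.exp (-(l * s)) * u s * (s ^ 2 / 2) ≤ laplace (fun t => t * u t) l :=
    calc _ = ∫ t in Ioc 0 s, Real.exp (-(l * s)) * u s * t := hconst.symm
      _ ≤ ∫ t in Ioc 0 s, Real.exp (-(l * t)) * (t * u t) := by
        refine setIntegral_mono_on ?_ (hint.mono_set Ioc_subset_Ioi_self) measurableSet_Ioc ?_
        · exact ((continuous_const.mul continuous_id).integrableOn_Icc).mono_set Ioc_subset_Icc_self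
        · rintro t ⟨ht, hts⟩
          have hut : u s ≤ u t := hanti ht hs hts
          have hus := hu0 s hs
          rw [mul_assoc, mul_comm (u s)]
          gcongr
      _ ≤ laplace (fun t => t * u t) l := by
        refine setIntegral_mono_set hint ?_ Ioc_subset_Ioi_self.eventuallyLE
        filter_upwards [ae_restrict_mem measurableSet_Ioi] with t ht
        have ht0 : 0 < t := ht
        have := hu0 t ht
        simp only [Pi.zero_apply]
        positivity
  calc u s * s ^ 2
      = 2 * Real.exp (l * s) * (Real.exp (-(l * s)) * u s * (s ^ 2 / 2)) := by
        rw [Real.exp_neg]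
        field_simp
    _ ≤ _ := by gcongr

lemma integral_exp_neg_mul_mul_id {l : ℝ} (hl : 0 < l) :
    ∫ t in Ioi (0 : ℝ), Real.exp (-(l * t)) * t = 1 / l ^ 2 := by
  have h := Real.integral_rpow_mul_exp_neg_mul_Ioi (a := 2) two_pos hl
  norm_num at h
  simpa only [mul_comm, one_div] using h

/- Split at `s`: below it trade `e^{-lt}` for `e^{-kt}`, above it use `u t ≤ u s`. -/
lemma laplace_id_mul_le (hu0 : ∀ t, 0 < t → 0 ≤ u t) (hanti : AntitoneOn u (Ioi 0))
    (hu : LaplaceIntegrable u) {k l s : ℝ} (hl : 0 < l) (hlk : l ≤ k) (hs : 0 < s) :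
    laplace (fun t => t * u t) l ≤
      Real.exp ((k - l) * s) * laplace (fun t => t * u t) k + u s / l ^ 2 := by
  have hint : IntegrableOn (fun t => Real.exp (-(l * t)) * t) (Ioi 0) :=
    .of_integral_ne_zero (by rw [integral_exp_neg_mul_mul_id hl]; positivity)
  have hk := hu.id_mul k (hl.trans_le hlk)
  have hmono : laplace (fun t => t * u t) l ≤ ∫ t in Ioi (0 : ℝ),
      (Real.exp ((k - l) * s) * (Real.exp (-(k * t)) * (t * u t)) +
        u s * (Real.exp (-(l * t)) * t)) := by
    refine setIntegral_mono_on (hu.id_mul l hl) ((hk.const_mul _).add (hint.const_mul _))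
      measurableSet_Ioi fun t ht => ?_
    have ht0 : 0 < t := ht
    have hut := hu0 t ht
    have hus := hu0 s hs
    rcases le_total t s with hts | hst
    · refine le_add_of_le_of_nonneg ?_ (by positivity)
      have hexp : Real.exp (-(l * t)) ≤ Real.exp ((k - l) * s) * Real.exp (-(k * t)) := by
        rw [← Real.exp_add, Real.exp_le_exp]
        nlinarith
      calc Real.exp (-(l * t)) * (t * u t)
          ≤ Real.exp ((k - l) * s) * Real.exp (-(k * t)) * (t * u t) := by gcongr
        _ = Real.exp ((k - l) * s) * (Real.exp (-(k * t)) * (t * u t)) := mul_assoc _ _ _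
    · refine le_add_of_nonneg_of_le (by positivity) ?_
      have hle : u t ≤ u s := hanti hs ht hst
      calc Real.exp (-(l * t)) * (t * u t) ≤ Real.exp (-(l * t)) * (t * u s) := by gcongr
        _ = u s * (Real.exp (-(l * t)) * t) := by ring
  rwa [integral_add (hk.const_mul _) (hint.const_mul _), integral_const_mul, integral_const_mul,
    integral_exp_neg_mul_mul_id hl, mul_one_div] at hmono

lemma exists_eventually_mul_laplace_id_mul_le (hu0 : ∀ t, 0 < t → 0 ≤ u t)
    (hanti : AntitoneOn u (Ioi 0)) (hu : LaplaceIntegrable u) {θ : ℝ} (hθ : θ < 1)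
    (hdecay : ∀ᶠ l in atTop,
      laplace (fun t => t * u t) (2 * l) ≤ θ * laplace (fun t => t * u t) l) :
    ∃ δ κ, 0 < δ ∧ 0 < κ ∧
      ∀ᶠ l in atTop, κ * laplace (fun t => t * u t) l ≤ u (δ / l) / l ^ 2 := by
  have hδ : 0 < 1 - θ := sub_pos.2 hθ
  refine ⟨1 - θ, 1 - Real.exp (1 - θ) * θ, hδ, ?_, ?_⟩
  · have h := Real.add_one_lt_exp (neg_ne_zero.2 hδ.ne')
    calc (0 : ℝ) < Real.exp (1 - θ) * (Real.exp (-(1 - θ)) - θ) :=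
          mul_pos (Real.exp_pos _) (by linarith)
      _ = 1 - Real.exp (1 - θ) * θ := by
          rw [mul_sub, ← Real.exp_add, add_neg_cancel, Real.exp_zero]
  · filter_upwards [hdecay, eventually_gt_atTop 0] with l hle hl
    have h := laplace_id_mul_le hu0 hanti hu hl (by linarith : l ≤ 2 * l) (div_pos hδ hl)
    rw [show (2 * l - l) * ((1 - θ) / l) = 1 - θ by field_simp; ring] at h
    nlinarith [mul_le_mul_of_nonneg_left hle (Real.exp_nonneg (1 - θ))]

lemma exists_le_mul_comp_four_mul (hu0 : ∀ t, 0 < t → 0 ≤ u t)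
    (hanti : AntitoneOn u (Ioi 0)) (hu : LaplaceIntegrable u) {θ : ℝ} (hθ : θ < 1)
    (hdecay : ∀ᶠ l in atTop,
      laplace (fun t => t * u t) (2 * l) ≤ θ * laplace (fun t => t * u t) l) :
    ∃ C s₀, 0 < C ∧ 0 < s₀ ∧ ∀ s, 0 < s → s ≤ s₀ → u s ≤ C * u (4 * s) := by
  obtain ⟨δ, κ, hδ, hκ, hV⟩ := exists_eventually_mul_laplace_id_mul_le hu0 hanti hu hθ hdecay
  obtain ⟨L, hVle, hL⟩ := ((eventually_forall_ge_atTop.2 hV).and (eventually_gt_atTop 0)).exists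
  refine ⟨32 * Real.exp (δ / 4) / (κ * δ ^ 2), δ / (4 * L), by positivity, by positivity,
    fun s hs hs₀ => ?_⟩
  have hLs : L ≤ δ / (4 * s) := by
    rw [le_div_iff₀ (by positivity)] at hs₀ ⊢
    linarith
  have hupper := hVle _ hLs
  have hlower := mul_sq_le_laplace_id_mul hu0 hanti hu (by positivity : 0 < δ / (4 * s)) hs
  rw [div_div_cancel₀ hδ.ne', ← le_div_iff₀' hκ] at hupper
  rw [show δ / (4 * s) * s = δ / 4 by field_simp] at hlower
  have hchain : u s * s ^ 2 ≤ 2 * Real.exp (δ / 4) * (u (4 * s) / (δ / (4 * s)) ^ 2 / κ) :=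
    hlower.trans (by gcongr)
  calc u s = u s * s ^ 2 / s ^ 2 := by field_simp
    _ ≤ 2 * Real.exp (δ / 4) * (u (4 * s) / (δ / (4 * s)) ^ 2 / κ) / s ^ 2 := by
      exact div_le_div_of_nonneg_right hchain (sq_nonneg s)
    _ = 32 * Real.exp (δ / 4) / (κ * δ ^ 2) * u (4 * s) := by
      field_simp
      ring

end Tauberian

section GaussianMixture

/-- The mixture at radius `r` of the heat kernel exponentials `e^{-r²/(4t)}` with weight `m`; the
normalisation `(4πt)^{-d/2}` of the heat kernel is part of `m`. -/
noncomputable def gaussianMixture (m : ℝ → ℝ) (r : ℝ) : ℝ :=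
  ∫ t in Ioi (0 : ℝ), Real.exp (-(r ^ 2 / (4 * t))) * m t

/-- The integral defining `gaussianMixture m r` converges absolutely at every radius `r > 0`. -/
def GaussianIntegrable (m : ℝ → ℝ) : Prop :=
  ∀ r, 0 < r → IntegrableOn (fun t => Real.exp (-(r ^ 2 / (4 * t))) * m t) (Ioi 0)

variable {m : ℝ → ℝ}

lemma gaussianMixture_nonneg (hm0 : ∀ t, 0 < t → 0 ≤ m t) (r : ℝ) : 0 ≤ gaussianMixture m r :=
  setIntegral_nonneg measurableSet_Ioi fun t ht => mul_nonneg (Real.exp_nonneg _) (hm0 t ht)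

lemma gaussianMixture_antitoneOn (hm0 : ∀ t, 0 < t → 0 ≤ m t) (hm : GaussianIntegrable m) :
    AntitoneOn (gaussianMixture m) (Ioi 0) := by
  intro a ha b hb hab
  have ha0 : 0 < a := ha
  refine setIntegral_mono_on (hm b hb) (hm a ha) measurableSet_Ioi fun t ht => ?_
  have ht0 : 0 < t := ht
  have := hm0 t ht
  gcongr

/- With `x = a² / (4t)` and `k = (b² - a²) / a²` the left-hand side is `e^{-x} (1 - e^{-kx})`, so
the bound follows from `1 - e^{-kx} ≤ kx` and `x ≤ 2 e^{3x/4}`. -/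
lemma exp_neg_sq_div_sub_le {a b t : ℝ} (ha : 0 < a) (hab : a ≤ b) (ht : 0 < t) :
    Real.exp (-(a ^ 2 / (4 * t))) - Real.exp (-(b ^ 2 / (4 * t))) ≤
      2 * ((b ^ 2 - a ^ 2) / a ^ 2) * Real.exp (-((a / 2) ^ 2 / (4 * t))) := by
  set x := a ^ 2 / (4 * t) with hx
  set k := (b ^ 2 - a ^ 2) / a ^ 2 with hk
  have hk0 : 0 ≤ k := div_nonneg (by nlinarith) (sq_nonneg a)
  have hb : b ^ 2 / (4 * t) = x + k * x := by
    rw [hx, hk]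
    field_simp
    ring
  have hhalf : (a / 2) ^ 2 / (4 * t) = x / 4 := by
    rw [hx]
    ring
  have htangent : 1 - Real.exp (-(k * x)) ≤ k * x := by
    linarith [Real.add_one_le_exp (-(k * x))]
  have hx2 : x ≤ 2 * Real.exp (3 * x / 4) := by
    have := Real.add_one_le_exp (3 * x / 4)
    have := Real.exp_pos (3 * x / 4)
    linarith
  rw [hb, hhalf]
  calc Real.exp (-x) - Real.exp (-(x + k * x))
      = Real.exp (-x) * (1 - Real.exp (-(k * x))) := by rw [neg_add, Real.exp_add]; ring
    _ ≤ Real.exp (-x) * (k * (2 * Real.exp (3 * x / 4))) := by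
        gcongr
        exact htangent.trans (by gcongr)
    _ = 2 * k * (Real.exp (-x) * Real.exp (3 * x / 4)) := by ring
    _ = 2 * k * Real.exp (-(x / 4)) := by
        rw [← Real.exp_add]
        ring_nf

lemma gaussianMixture_sub_le (hm0 : ∀ t, 0 < t → 0 ≤ m t) (hm : GaussianIntegrable m) {a b : ℝ}
    (ha : 0 < a) (hab : a ≤ b) :
    gaussianMixture m a - gaussianMixture m b ≤
      2 * ((b ^ 2 - a ^ 2) / a ^ 2) * gaussianMixture m (a / 2) := by
  have hma := hm a ha
  have hmb := hm b (ha.trans_le hab)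
  simp only [gaussianMixture]
  rw [← integral_sub hma hmb, ← integral_const_mul]
  refine setIntegral_mono_on (hma.sub hmb) ((hm _ (half_pos ha)).const_mul _) measurableSet_Ioi
    fun t ht => ?_
  rw [← sub_mul, ← mul_assoc]
  exact mul_le_mul_of_nonneg_right (exp_neg_sq_div_sub_le ha hab ht) (hm0 t ht)

/- For small `t` the substitution `t ↦ 4t` turns the exponential at radius `r / 2` into the one at
radius `r`; for `t ≥ s₀` both exponentials are comparable to `1`. -/
lemma exp_neg_half_sq_div_mul_le {C s₀ r R t : ℝ} (hC : 0 ≤ C) (hs₀ : 0 < s₀) (hr : 0 ≤ r)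
    (hrR : r ≤ R) (ht : 0 < t) (hmt : 0 ≤ m t) (hm4t : 0 ≤ m (4 * t))
    (hdoubling : t ≤ s₀ → m t ≤ C * m (4 * t)) :
    Real.exp (-((r / 2) ^ 2 / (4 * t))) * m t ≤
      Real.exp (R ^ 2 / (4 * s₀)) * (Real.exp (-(r ^ 2 / (4 * t))) * m t) +
        C * (Real.exp (-(r ^ 2 / (4 * (4 * t)))) * m (4 * t)) := by
  rcases le_total t s₀ with hts | hst
  · refine le_add_of_nonneg_of_le (by positivity) ?_
    have hexp : (r / 2) ^ 2 / (4 * t) = r ^ 2 / (4 * (4 * t)) := by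
      field_simp
      ring
    rw [hexp, mul_left_comm C]
    exact mul_le_mul_of_nonneg_left (hdoubling hts) (Real.exp_nonneg _)
  · refine le_add_of_le_of_nonneg ?_ (by positivity)
    have hle : r ^ 2 / (4 * t) ≤ R ^ 2 / (4 * s₀) := by gcongr
    have hhalf : 0 ≤ (r / 2) ^ 2 / (4 * t) := by positivity
    rw [← mul_assoc, ← Real.exp_add]
    gcongr
    linarith

lemma exists_gaussianMixture_half_le (hm0 : ∀ t, 0 < t → 0 ≤ m t) (hm : GaussianIntegrable m)
    {C s₀ : ℝ} (hC : 0 ≤ C) (hs₀ : 0 < s₀)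
    (hdoubling : ∀ t, 0 < t → t ≤ s₀ → m t ≤ C * m (4 * t)) (R : ℝ) :
    ∃ D, 0 < D ∧ ∀ r, 0 < r → r ≤ R → gaussianMixture m (r / 2) ≤ D * gaussianMixture m r := by
  refine ⟨Real.exp (R ^ 2 / (4 * s₀)) + C / 4, by positivity, fun r hr hrR => ?_⟩
  set f : ℝ → ℝ := fun t => Real.exp (-(r ^ 2 / (4 * t))) * m t
  have hint : IntegrableOn f (Ioi 0) := hm r hr
  have hintscaled : IntegrableOn (fun t => f (4 * t)) (Ioi 0) := by
    rwa [integrableOn_Ioi_comp_mul_left_iff f 0 four_pos, mul_zero]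
  have hscaled : ∫ t in Ioi (0 : ℝ), f (4 * t) = gaussianMixture m r / 4 := by
    rw [integral_comp_mul_left_Ioi f 0 four_pos, mul_zero, smul_eq_mul, gaussianMixture,
      inv_mul_eq_div]
  calc gaussianMixture m (r / 2)
      ≤ ∫ t in Ioi (0 : ℝ), (Real.exp (R ^ 2 / (4 * s₀)) * f t + C * f (4 * t)) :=
        setIntegral_mono_on (hm _ (half_pos hr))
          ((hint.const_mul _).add (hintscaled.const_mul _)) measurableSet_Ioi
          fun t ht => exp_neg_half_sq_div_mul_le hC hs₀ hr.le hrR ht (hm0 t ht)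
            (hm0 (4 * t) (mul_pos four_pos ht)) (hdoubling t ht)
    _ = Real.exp (R ^ 2 / (4 * s₀)) * gaussianMixture m r + C * (gaussianMixture m r / 4) := by
        rw [integral_add (hint.const_mul _) (hintscaled.const_mul _), integral_const_mul,
          integral_const_mul, hscaled, gaussianMixture]
    _ = (Real.exp (R ^ 2 / (4 * s₀)) + C / 4) * gaussianMixture m r := by ring

lemma sq_sub_sq_div_sq_le {a b r : ℝ} (hr : 0 < r) (hra : r ≤ a) (hab : a ≤ b) (hbr : b - a ≤ r) :
    (b ^ 2 - a ^ 2) / a ^ 2 ≤ 3 * ((b - a) / r) := by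
  have ha : 0 < a := hr.trans_le hra
  calc (b ^ 2 - a ^ 2) / a ^ 2 = (b - a) / a * ((a + b) / a) := by
        field_simp
        ring
    _ ≤ (b - a) / r * 3 := by
        have hsum : (a + b) / a ≤ 3 := by rw [div_le_iff₀ ha]; linarith
        exact mul_le_mul (div_le_div_of_nonneg_left (sub_nonneg.2 hab) hr hra) hsum
          (div_nonneg (by linarith) ha.le) (div_nonneg (sub_nonneg.2 hab) hr.le)
    _ = 3 * ((b - a) / r) := mul_comm _ _

lemma abs_gaussianMixture_sub_le (hm0 : ∀ t, 0 < t → 0 ≤ m t) (hm : GaussianIntegrable m)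
    {a b r D : ℝ} (hr : 0 < r) (hra : r ≤ a) (hrb : r ≤ b) (hD : 0 ≤ D)
    (hhalf : gaussianMixture m (r / 2) ≤ D * gaussianMixture m r) :
    |gaussianMixture m a - gaussianMixture m b| ≤
      (1 + 6 * D) * gaussianMixture m r * min 1 (|a - b| / r) := by
  wlog hab : a ≤ b generalizing a b
  · rw [abs_sub_comm, abs_sub_comm a]
    exact this hrb hra (le_of_not_ge hab)
  have ha : 0 < a := hr.trans_le hra
  have hanti := gaussianMixture_antitoneOn hm0 hm
  have hG := gaussianMixture_nonneg hm0
  rw [abs_of_nonneg (sub_nonneg.2 (hanti ha (ha.trans_le hab) hab)), abs_sub_comm,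
    abs_of_nonneg (sub_nonneg.2 hab)]
  rcases le_total (b - a) r with hbr | hbr
  · rw [min_eq_right ((div_le_one hr).2 hbr)]
    have : 0 ≤ (b - a) / r := div_nonneg (sub_nonneg.2 hab) hr.le
    have hhalf_anti : gaussianMixture m (a / 2) ≤ gaussianMixture m (r / 2) :=
      hanti (half_pos hr) (half_pos ha) (by linarith)
    calc gaussianMixture m a - gaussianMixture m b
        ≤ 2 * ((b ^ 2 - a ^ 2) / a ^ 2) * gaussianMixture m (a / 2) :=
          gaussianMixture_sub_le hm0 hm ha hab
      _ ≤ 2 * (3 * ((b - a) / r)) * (D * gaussianMixture m r) :=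
          mul_le_mul (by linarith [sq_sub_sq_div_sq_le hr hra hab hbr]) (hhalf_anti.trans hhalf)
            (hG _) (by positivity)
      _ = 6 * D * gaussianMixture m r * ((b - a) / r) := by ring
      _ ≤ (1 + 6 * D) * gaussianMixture m r * ((b - a) / r) := by
          have := hG r
          gcongr
          linarith
  · rw [min_eq_left ((one_le_div hr).2 hbr), mul_one]
    calc gaussianMixture m a - gaussianMixture m b ≤ gaussianMixture m r :=
          (sub_le_self _ (hG b)).trans (hanti hr ha hra)
      _ ≤ (1 + 6 * D) * gaussianMixture m r := le_mul_of_one_le_left (hG r) (by linarith)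

end GaussianMixture

section GreenFunction

/-- The weight for which `gaussianMixture` is the radial Green function profile in dimension `δ`
of the subordinator with potential density `u`. -/
noncomputable def greenWeight (δ : ℝ) (u : ℝ → ℝ) (t : ℝ) : ℝ :=
  (4 * Real.pi * t) ^ (-δ / 2) * u t

variable {δ : ℝ} {u : ℝ → ℝ}

lemma greenWeight_nonneg (hu0 : ∀ t, 0 < t → 0 ≤ u t) {t : ℝ} (ht : 0 < t) :
    0 ≤ greenWeight δ u t :=
  mul_nonneg (Real.rpow_nonneg (by positivity) _) (hu0 t ht)

lemma greenWeight_le_mul_comp_four_mul {C t : ℝ} (ht : 0 < t) (hle : u t ≤ C * u (4 * t)) :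
    greenWeight δ u t ≤ C * 4 ^ (δ / 2) * greenWeight δ u (4 * t) := by
  have hscale : (4 * Real.pi * (4 * t)) ^ (-δ / 2) =
      (4 ^ (δ / 2))⁻¹ * (4 * Real.pi * t) ^ (-δ / 2) := by
    rw [mul_left_comm, Real.mul_rpow (by positivity) (by positivity), neg_div,
      Real.rpow_neg four_pos.le]
  calc greenWeight δ u t ≤ (4 * Real.pi * t) ^ (-δ / 2) * (C * u (4 * t)) := by
        unfold greenWeight
        gcongr
    _ = C * 4 ^ (δ / 2) * greenWeight δ u (4 * t) := by
        rw [greenWeight, hscale]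
        field_simp

lemma greenWeight_eq_const_mul {t : ℝ} (ht : 0 < t) :
    greenWeight δ u t = (4 * Real.pi) ^ (-δ / 2) * (t ^ (-δ / 2) * u t) := by
  rw [greenWeight, Real.mul_rpow (by positivity) ht.le, mul_assoc]

lemma gaussianIntegrable_greenWeight (hδ : 2 < δ) (hu0 : ∀ t, 0 < t → 0 ≤ u t)
    (hanti : AntitoneOn u (Ioi 0)) (hu : LaplaceIntegrable u) :
    GaussianIntegrable (greenWeight δ u) := by
  intro r hr
  suffices h : IntegrableOn
      (fun t => t ^ (-(δ / 2)) * Real.exp (-(r ^ 2 / 4 / t)) * u t) (Ioi 0) by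
    refine IntegrableOn.congr_fun (h.const_mul ((4 * Real.pi) ^ (-δ / 2))) (fun t ht => ?_)
      measurableSet_Ioi
    simp only [greenWeight_eq_const_mul (mem_Ioi.1 ht), div_div, neg_div]
    ring
  rw [← Ioc_union_Ioi_eq_Ioi zero_le_one]
  refine IntegrableOn.union ?_ ?_
  · refine integrableOn_mul_of_abs_le (h := fun _ => 1) (C := (δ / 2 / (r ^ 2 / 4)) ^ (δ / 2))
      measurableSet_Ioc (by fun_prop) (by fun_prop) (fun _ _ => one_pos) (fun t ht => ?_)
      (by simpa only [one_mul] using hu.integrableOn_Ioc 1)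
    have ht0 : 0 < t := ht.1
    rw [abs_of_nonneg (by positivity), mul_one]
    exact rpow_neg_mul_exp_neg_div_le (by linarith) (by positivity) ht0
  · have hsub : Ioi (1 : ℝ) ⊆ Ioi 0 := Ioi_subset_Ioi zero_le_one
    have hmeas := aemeasurable_restrict_of_antitoneOn (μ := volume) measurableSet_Ioi
      (hanti.mono hsub)
    refine ((integrableOn_Ioi_rpow_of_lt (by linarith : -(δ / 2) < -1) one_pos).mul_const
      (u 1)).mono' ((by fun_prop : Measurable _).aemeasurable.mul hmeas).aestronglyMeasurable ?_
    filter_upwards [ae_restrict_mem measurableSet_Ioi] with t ht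
    have ht0 : 0 < t := hsub ht
    have hut := hu0 t ht0
    have hle : u t ≤ u 1 := hanti (mem_Ioi.2 one_pos) ht0 (mem_Ioi.1 ht).le
    rw [Real.norm_of_nonneg (by positivity)]
    have hexp : Real.exp (-(r ^ 2 / 4 / t)) ≤ 1 :=
      Real.exp_le_one_iff.2 (neg_nonpos.2 (by positivity))
    gcongr
    exact mul_le_of_le_one_right (by positivity) hexp

lemma gaussianMixture_greenWeight (r : ℝ) :
    gaussianMixture (greenWeight δ u) r =
      ∫ t in Ioi (0 : ℝ), (4 * Real.pi * t) ^ (-δ / 2) * Real.exp (-(r ^ 2 / (4 * t))) * u t :=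
  setIntegral_congr_fun measurableSet_Ioi fun t _ => by
    simp only [greenWeight]
    ring

variable {φ φ' : ℝ → ℝ}

lemma tendsto_atTop_of_laplace_eq_one_div (hw : LaplaceIntegrable u)
    (hφpos : ∀ l, 0 < l → 0 < φ l) (hu : ∀ l, 0 < l → laplace u l = 1 / φ l) :
    Tendsto φ atTop atTop := by
  have hinv : Tendsto (fun l => (φ l)⁻¹) atTop (𝓝 0) := by
    refine (tendsto_laplace_atTop_zero hw).congr' ?_
    filter_upwards [eventually_gt_atTop 0] with l hl
    rw [hu l hl, one_div]
  refine (tendsto_inv_nhdsGT_zero.comp (tendsto_nhdsWithin_iff.2 ⟨hinv, ?_⟩)).congr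
    fun l => inv_inv _
  filter_upwards [eventually_gt_atTop 0] with l hl using inv_pos.2 (hφpos l hl)

lemma exists_potentialDensity_le_mul_comp_four_mul {ρ : ℝ} (hρ : 1 / 4 < ρ)
    (hφpos : ∀ l, 0 < l → 0 < φ l) (hφ' : ∀ l, 0 < l → HasDerivAt φ (φ' l) l)
    (hratio : Tendsto (fun l => φ' (2 * l) / φ' l) atTop (𝓝 ρ))
    (hu0 : ∀ t, 0 < t → 0 ≤ u t) (hanti : AntitoneOn u (Ioi 0))
    (hu : ∀ l, 0 < l → laplace u l = 1 / φ l) :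
    ∃ C s₀, 0 < C ∧ 0 < s₀ ∧ ∀ s, 0 < s → s ≤ s₀ → u s ≤ C * u (4 * s) := by
  have hint := laplaceIntegrable_of_laplace_eq_one_div (fun l hl => (hφpos l hl).ne') hu
  have hV : ∀ l, 0 < l → laplace (fun t => t * u t) l = φ' l / φ l ^ 2 := fun l hl =>
    laplace_id_mul_eq_of_laplace_eq_one_div hint (fun l hl => (hφpos l hl).ne') hφ' hu hl
  have hφ'0 : ∀ l, 0 < l → 0 ≤ φ' l := fun l hl => by
    have h := laplace_nonneg (fun t ht => mul_nonneg ht.le (hu0 t ht)) l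
    rw [hV l hl] at h
    simpa only [zero_mul] using (le_div_iff₀ (pow_pos (hφpos l hl) 2)).1 h
  obtain ⟨θ, hθ, hdecay⟩ := exists_eventually_div_sq_two_mul_le hρ hφ' hφ'0
    (tendsto_atTop_of_laplace_eq_one_div hint hφpos hu) hratio
  refine exists_le_mul_comp_four_mul hu0 hanti hint hθ ?_
  filter_upwards [hdecay, eventually_gt_atTop 0] with l hle hl
  rwa [hV l hl, hV (2 * l) (by positivity)]

end GreenFunction

end SubordinateBrownian

open SubordinateBrownian

theorem green_difference_estimate_general {E : Type*} [SeminormedAddCommGroup E] {δ ρ R : ℝ}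
    (hρ : 1 / 4 < ρ) {φ φ' u g : ℝ → ℝ} (hφpos : ∀ l, 0 < l → 0 < φ l)
    (hφ' : ∀ l, 0 < l → HasDerivAt φ (φ' l) l)
    (hratio : Tendsto (fun l => φ' (2 * l) / φ' l) atTop (𝓝 ρ))
    (hu0 : ∀ t, 0 < t → 0 ≤ u t) (hanti : AntitoneOn u (Ioi 0))
    (hu : ∀ l, 0 < l → laplace u l = 1 / φ l)
    (hint : GaussianIntegrable (greenWeight δ u))
    (hg : ∀ r, 0 < r → g r = gaussianMixture (greenWeight δ u) r) :
    ∃ c, 0 < c ∧ ∀ r, 0 < r → r ≤ R → ∀ x y : E, r ≤ ‖x‖ → r ≤ ‖y‖ →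
      |g ‖x‖ - g ‖y‖| ≤ c * g r * min 1 (‖x - y‖ / r) := by
  have hm0 : ∀ t, 0 < t → 0 ≤ greenWeight δ u t := fun t => greenWeight_nonneg hu0
  obtain ⟨C, s₀, hC, hs₀, hdoubling⟩ :=
    exists_potentialDensity_le_mul_comp_four_mul hρ hφpos hφ' hratio hu0 hanti hu
  obtain ⟨D, hD, hhalf⟩ := exists_gaussianMixture_half_le hm0 hint (by positivity) hs₀
    (fun t ht hts => greenWeight_le_mul_comp_four_mul ht (hdoubling t ht hts)) R
  refine ⟨1 + 6 * D, by positivity, fun r hr hrR x y hx hy => ?_⟩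
  rw [hg r hr, hg _ (hr.trans_le hx), hg _ (hr.trans_le hy)]
  have hG := gaussianMixture_nonneg hm0 r
  exact (abs_gaussianMixture_sub_le hm0 hint hr hx hy hD.le (hhalf r hr hrR)).trans
    (by gcongr; exact abs_norm_sub_norm_le x y)

/-- Green function difference estimate: under (A-1) with `α ∈ [0,2]` ((A-4) in addition when
`α = 2`) and (A-3), there is `c > 0` such that for every `r ∈ (0,1)` and all
`x, y ∈ ℝ^d` with `|x| ≥ r`, `|y| ≥ r`:
`|G(x) - G(y)| ≤ c g(r) min(1, |x-y|/r)`, where `G(x) = g(|x|)`. -/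
theorem green_difference_estimate
    (d : ℕ) (hd : 3 ≤ d)
    (α : ℝ) (hα0 : 0 ≤ α) (hα2 : α ≤ 2)
    (μ φ φ' : ℝ → ℝ)
    (hμpos : ∀ t, 0 < t → 0 < μ t)
    (hμdec : ∀ s t, 0 < s → s ≤ t → μ t ≤ μ s)
    (hμint : IntegrableOn (fun t => min 1 t * μ t) (Ioi 0))
    (hφ : ∀ l, 0 < l → φ l = ∫ t in Ioi (0:ℝ), (1 - Real.exp (-(l * t))) * μ t)
    (hφ' : ∀ l, 0 < l → φ' l = ∫ t in Ioi (0:ℝ), t * Real.exp (-(l * t)) * μ t)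
    (hA1 : ∀ x, 0 < x →
      Tendsto (fun l => φ' (l * x) / φ' l) atTop (𝓝 (x ^ (α / 2 - 1))))
    (hA4 : α = 2 → ∃ ψ' : ℝ → ℝ,
      (∀ l, 0 < l → HasDerivAt (fun s => s / φ s) (ψ' l) l) ∧
      ∀ x, 0 < x → Tendsto (fun l => ψ' (l * x) / ψ' l) atTop (𝓝 x⁻¹))
    (u : ℝ → ℝ)
    (hupos : ∀ t, 0 < t → 0 < u t)
    (hudec : ∀ s t, 0 < s → s ≤ t → u t ≤ u s)
    (hu : ∀ l, 0 < l → ∫ t in Ioi (0:ℝ), Real.exp (-(l * t)) * u t = 1 / φ l)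
    (g : ℝ → ℝ)
    (hg : ∀ r, 0 < r → g r =
      ∫ t in Ioi (0:ℝ), (4 * Real.pi * t) ^ (-(d:ℝ) / 2) * Real.exp (-(r ^ 2 / (4 * t))) * u t) :
    ∃ c : ℝ, 0 < c ∧ ∀ r, 0 < r → r < 1 → ∀ x y : EuclideanSpace ℝ (Fin d),
      r ≤ ‖x‖ → r ≤ ‖y‖ →
        |g ‖x‖ - g ‖y‖| ≤ c * g r * min 1 (‖x - y‖ / r) := by
  have hd2 : (2 : ℝ) < d := by exact_mod_cast hd
  have hρ : (1 / 4 : ℝ) < 2 ^ (α / 2 - 1) :=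
    calc (1 / 4 : ℝ) < 2 ^ (-1 : ℝ) := by norm_num [Real.rpow_neg_one]
      _ ≤ 2 ^ (α / 2 - 1) := Real.rpow_le_rpow_of_exponent_le one_le_two (by linarith)
  have hφpos : ∀ l, 0 < l → 0 < φ l := fun l => bernstein_pos hμpos hμint hφ
  have hu0 : ∀ t, 0 < t → 0 ≤ u t := fun t ht => (hupos t ht).le
  have hanti : AntitoneOn u (Ioi 0) := fun s hs t _ hst => hudec s t hs hst
  have hint := gaussianIntegrable_greenWeight hd2 hu0 hanti
    (laplaceIntegrable_of_laplace_eq_one_div (fun l hl => (hφpos l hl).ne') hu)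
  obtain ⟨c, hc, hestimate⟩ := green_difference_estimate_general
    (E := EuclideanSpace ℝ (Fin d)) (R := 1) hρ hφpos (fun l => hasDerivAt_bernstein hμint hφ hφ')
    (by simpa only [mul_comm] using hA1 2 two_pos) hu0 hanti hu hint
    fun r hr => (hg r hr).trans (gaussianMixture_greenWeight r).symm
  exact ⟨c, hc, fun r hr hr1 => hestimate r hr hr1.le⟩
end
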